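/- arXiv:1603.05944 — 8 statements merged into one kernel-verified Lean document; each statement's English description precedes it below -/
import Mathlib

section
/- There exists a constant c > 0 such that for infinitely many natural numbers n there exist a finite connected simple graph G on n vertices with maximum degree at most 3 and a walk w on G following the LRV-v policy whose cover time is at least 2^(c·n). (In particular, the least-recently-visited-vertex strategy can take time exponential in n to explore a graph of maximum degree 3, such as the dual graph of a triangulation of a polygonal region.) -/
/-! # Exponential cover time of the LRV-v policy

A gadget on eight vertices `0, …, 7` (with leaves `0` and `7`) has a periodic LRV-v walk of
period 20 which visits leaf `0` twice and leaf `7` once per period.  Chaining `m` gadgets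
(identifying leaf `7` of gadget `j` with leaf `0` of gadget `j + 1`) gives a binary counter. -/

namespace LRV

/-- Edges of the gadget. -/
def edges : List (ℕ × ℕ) :=
  [(0, 2), (2, 4), (2, 5), (3, 4), (3, 6), (1, 4), (5, 6), (1, 5), (3, 7)]

/-- Adjacency in the gadget. -/
def E (x y : ℕ) : Prop := (x, y) ∈ edges ∨ (y, x) ∈ edges

instance (x y : ℕ) : Decidable (E x y) := by unfold E; infer_instance

/-- One period of the walk in the gadget. -/
def per : List ℕ := [0, 2, 4, 3, 6, 5, 1, 4, 2, 0, 2, 5, 6, 3, 7, 3, 4, 1, 5, 2]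

/-- The walk in the gadget. -/
def h (t : ℕ) : ℕ := per.getD (t % 20) 0

/-- Number of steps since the last visit of `x`. -/
def age (p x : ℕ) : ℕ := ((List.range 20).map (fun d => h (p + 20 - d))).idxOf x

/-- `x` was last visited before `y` was, or `x = y`. -/
def rel (t x y : ℕ) : Prop := age (t % 20) y ≤ age (t % 20) x

instance (t x y : ℕ) : Decidable (rel t x y) := by unfold rel; infer_instance

lemma E_lt {x y : ℕ} (H : E x y) : x < 8 ∧ y < 8 := by
  simp [E, edges] at H; omega

lemma E_symm {x y : ℕ} (H : E x y) : E y x := H.symm.imp id id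

lemma E_ne {x y : ℕ} (H : E x y) : x ≠ y := by
  simp [E, edges] at H; omega

lemma h_mod (t : ℕ) : h t = h (t % 20) := by simp [h]
lemma h_mod1 (t : ℕ) : h (t + 1) = h (t % 20 + 1) := by simp [h]
lemma rel_mod (t x y : ℕ) : rel t x y ↔ rel (t % 20) x y := by simp [rel]
lemma rel_mod1 (t x y : ℕ) : rel (t + 1) x y ↔ rel (t % 20 + 1) x y := by simp [rel]

lemma h_lt (t : ℕ) : h t < 8 := by
  rw [h_mod]
  have : ∀ p < 20, h p < 8 := by decide +kernel
  exact this _ (Nat.mod_lt _ (by norm_num))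

lemma h_zero (t : ℕ) : h t = 0 ↔ t % 20 = 0 ∨ t % 20 = 9 := by
  rw [h_mod]
  have : ∀ p < 20, h p = 0 ↔ p = 0 ∨ p = 9 := by decide +kernel
  exact this _ (Nat.mod_lt _ (by norm_num))

lemma h_seven (t : ℕ) : h t = 7 ↔ t % 20 = 14 := by
  rw [h_mod]
  have : ∀ p < 20, h p = 7 ↔ p = 14 := by decide +kernel
  exact this _ (Nat.mod_lt _ (by norm_num))

lemma h_adj (t : ℕ) : E (h t) (h (t + 1)) := by
  rw [h_mod, h_mod1]
  have : ∀ p < 20, E (h p) (h (p + 1)) := by decide +kernel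
  exact this _ (Nat.mod_lt _ (by norm_num))

lemma h_lrv (t y : ℕ) (H : E (h t) y) : rel t (h (t + 1)) y := by
  rw [rel_mod, h_mod1]
  rw [h_mod] at H
  have : ∀ p < 20, ∀ y < 8, E (h p) y → rel p (h (p + 1)) y := by decide +kernel
  exact this _ (Nat.mod_lt _ (by norm_num)) y (E_lt H).2 H

set_option synthInstance.maxSize 2000 in
set_option synthInstance.maxHeartbeats 200000 in
lemma rel_step (t x y : ℕ) (hx : x < 8) (hy : y < 8) (H : rel (t + 1) x y) :
    y = h (t + 1) ∨ (x ≠ h (t + 1) ∧ rel t x y) := by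
  rw [rel_mod t, h_mod1]
  rw [rel_mod1] at H
  have : ∀ p < 20, ∀ x < 8, ∀ y < 8, rel (p + 1) x y →
    y = h (p + 1) ∨ (x ≠ h (p + 1) ∧ rel p x y) := by decide +kernel
  exact this _ (Nat.mod_lt _ (by norm_num)) x hx y hy H

lemma rel_top (t y : ℕ) (hy : y < 8) (H : rel t (h t) y) : y = h t := by
  rw [h_mod]
  rw [rel_mod, h_mod] at H
  have : ∀ p < 20, ∀ y < 8, rel p (h p) y → y = h p := by decide +kernel
  exact this _ (Nat.mod_lt _ (by norm_num)) y hy H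

lemma leaf_prev (t y : ℕ) (h1 : h (t + 1) = 0 ∨ h (t + 1) = 7) (H : E (h (t + 1)) y) :
    y = h t := by
  rw [h_mod1] at H h1
  rw [h_mod]
  have : ∀ p < 20, ∀ y < 8, (h (p + 1) = 0 ∨ h (p + 1) = 7) → E (h (p + 1)) y →
    y = h p := by decide +kernel
  exact this _ (Nat.mod_lt _ (by norm_num)) y (E_lt H).2 h1 H

/-- Next active gadget. -/
def nxt (m : ℕ) (c : ℕ × (ℕ → ℕ)) : ℕ :=
  if h (c.2 c.1) = 7 ∧ c.1 + 1 < m then c.1 + 1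
  else if h (c.2 c.1) = 0 then c.1 - 1 else c.1

/-- Step of the configuration (active gadget, local clocks). -/
def step (m : ℕ) (c : ℕ × (ℕ → ℕ)) : ℕ × (ℕ → ℕ) :=
  (nxt m c, Function.update c.2 (nxt m c) (c.2 (nxt m c) + 1))

/-- Configuration at time `t`. -/
def conf (m : ℕ) : ℕ → ℕ × (ℕ → ℕ)
  | 0 => (0, fun _ => 0)
  | t + 1 => step m (conf m t)

/-- Position for a configuration. -/
def pos (c : ℕ × (ℕ → ℕ)) : ℕ := 7 * c.1 + h (c.2 c.1)

/-- The walk. -/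
def W (m t : ℕ) : ℕ := pos (conf m t)

/-- Number of visits of leaf `0` before local time `s`. -/
def ca (s : ℕ) : ℕ := (s + 19) / 20 + (s + 10) / 20
/-- Number of visits of leaf `7` before local time `s`. -/
def cb (s : ℕ) : ℕ := (s + 5) / 20

/-- Counting invariant. -/
structure Inv (m t : ℕ) (c : ℕ × (ℕ → ℕ)) : Prop where
  lt : c.1 < m
  left : ∀ j < c.1, h (c.2 j) = 7
  right : ∀ j, c.1 < j → h (c.2 j) = 0
  cl : ∀ j < c.1, ca (c.2 (j + 1)) ≤ cb (c.2 j) + 1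
  cr : ∀ j, c.1 ≤ j → ca (c.2 (j + 1)) ≤ cb (c.2 j)
  time : c.2 0 ≤ t

lemma nxt_cases (m : ℕ) (c : ℕ × (ℕ → ℕ)) :
    (nxt m c = c.1 + 1 ∧ h (c.2 c.1) = 7 ∧ c.1 + 1 < m) ∨
    (nxt m c + 1 = c.1 ∧ h (c.2 c.1) = 0) ∨
    (nxt m c = c.1 ∧ (h (c.2 c.1) = 7 → ¬ c.1 + 1 < m) ∧ (h (c.2 c.1) = 0 → c.1 = 0)) := by
  unfold nxt
  split_ifs with h1 h2
  · exact Or.inl ⟨rfl, h1⟩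
  · rcases Nat.eq_zero_or_pos c.1 with h3 | h3
    · right; right; refine ⟨by omega, by omega, fun _ => h3⟩
    · right; left; exact ⟨by omega, h2⟩
  · right; right
    exact ⟨rfl, fun a b => h1 ⟨a, b⟩, fun a => absurd a h2⟩

lemma inv_step {m t : ℕ} {c : ℕ × (ℕ → ℕ)} (I : Inv m t c) : Inv m (t + 1) (step m c) := by
  obtain ⟨i, τ⟩ := c
  obtain ⟨hlt, hl, hr, hcl, hcr, htime⟩ := I
  simp only [h_zero, h_seven, ca, cb] at *
  have hc := nxt_cases m (i, τ)
  have e0 : h (τ i) = 0 ↔ _ := h_zero _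
  have e7 : h (τ i) = 7 ↔ _ := h_seven _
  simp only [e0, e7] at hc
  generalize hi' : nxt m (i, τ) = i' at hc
  have up : ∀ j, (Function.update τ i' (τ i' + 1)) j = if j = i' then τ i' + 1 else τ j := by
    intro j; simp [Function.update_apply]
  refine ⟨?_, ?_, ?_, ?_, ?_, ?_⟩ <;>
    simp only [step, hi', up, h_zero, h_seven, ca, cb]
  · omega
  · intro j hj
    rw [if_neg (by omega)]
    by_cases hji : j = i
    · subst hji; omega
    · exact hl j (by omega)
  · intro j hj
    rw [if_neg (by omega)]
    by_cases hji : j = i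
    · subst hji; omega
    · exact hr j (by omega)
  · intro j hj
    rw [if_neg (show j ≠ i' by omega)]
    have A := hcl j
    have B := hcr j
    by_cases hji : j + 1 = i'
    · rw [if_pos hji]
      subst hji
      have C := hl (j+1)
      have D := hl j
      have F := hr (j+1)
      by_cases hj2 : j = i
      · subst hj2
        omega
      · have : j + 1 ≤ i := by omega
        rcases hc with hc | hc | hc
        · omega
        · omega
        · obtain ⟨rfl, _⟩ := hc
          omega
    · rw [if_neg hji]
      by_cases hj2 : j < i
      · exact A hj2
      · omega
  · intro j hj
    rw [if_neg (show j + 1 ≠ i' by omega)]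
    have A := hcl j
    have B := hcr j
    by_cases hji : j = i'
    · rw [if_pos hji]
      subst hji
      have C := hl j
      omega
    · rw [if_neg hji]
      omega
  · split_ifs with h0
    · subst h0; omega
    · omega

lemma inv (m : ℕ) (hm : 0 < m) (t : ℕ) : Inv m t (conf m t) := by
  induction t with
  | zero =>
    refine ⟨hm, ?_, ?_, ?_, ?_, ?_⟩ <;> simp [conf, ca, cb, h_zero]
  | succ t ih => exact inv_step ih

lemma W_succ (m t : ℕ) : W m (t + 1) =
    7 * nxt m (conf m t) + h ((conf m t).2 (nxt m (conf m t)) + 1) := by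
  simp [W, pos, conf, step]

lemma W_cur (m : ℕ) (hm : 0 < m) (t : ℕ) : W m t =
    7 * nxt m (conf m t) + h ((conf m t).2 (nxt m (conf m t))) := by
  have I := inv m hm t
  rcases nxt_cases m (conf m t) with ⟨a, b, c⟩ | ⟨a, b⟩ | ⟨a, _⟩
  · have := I.right (nxt m (conf m t)) (by omega)
    simp only [W, pos]; omega
  · have := I.left (nxt m (conf m t)) (by omega)
    simp only [W, pos]; omega
  · rw [a]; rfl

lemma nxt_lt (m : ℕ) (hm : 0 < m) (t : ℕ) : nxt m (conf m t) < m := by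
  have := (inv m hm t).lt
  have := nxt_cases m (conf m t)
  omega

lemma W_le (m : ℕ) (hm : 0 < m) (t : ℕ) : W m t < 7 * m + 1 := by
  have := (inv m hm t).lt
  have := h_lt ((conf m t).2 (conf m t).1)
  simp only [W, pos]; omega

lemma W_end (m : ℕ) (hm : 0 < m) (t : ℕ) (H : W m t = 7 * m) : 2 ^ m ≤ t := by
  have I := inv m hm t
  have h1 := I.lt
  have h2 := h_lt ((conf m t).2 (conf m t).1)
  simp only [W, pos] at H
  have h3 : (conf m t).1 + 1 = m := by omega
  have h4 : h ((conf m t).2 (conf m t).1) = 7 := by omega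
  have key : ∀ k, k < m → ∀ j, j + k + 1 = m → 2 ^ (k + 1) ≤ ca ((conf m t).2 j) := by
    intro k
    induction k with
    | zero =>
      intro _ j hj
      have : j = (conf m t).1 := by omega
      subst this
      rw [h_seven] at h4
      simp only [ca]; omega
    | succ k ih =>
      intro hk j hj
      have A := ih (by omega) (j + 1) (by omega)
      have B := I.cl j (by omega)
      have C := I.left j (by omega)
      rw [h_seven] at C
      simp only [ca, cb] at *
      rw [pow_succ 2 (k+1)]
      omega
  have A := key (m - 1) (by omega) 0 (by omega)
  have B := I.time
  have C : h ((conf m t).2 0) = 7 := by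
    by_cases h0 : (conf m t).1 = 0
    · rw [h0] at h4; exact h4
    · exact I.left 0 (by omega)
  rw [h_seven] at C
  rw [Nat.sub_add_cancel hm] at A
  simp only [ca] at A
  omega

/-- Up to time `t`, `u` is visited less recently than `v`. -/
def R (m t u v : ℕ) : Prop :=
  ∀ t₁ : ℕ, t₁ ≤ t → W m t₁ = u → ∃ t₂ : ℕ, t₁ ≤ t₂ ∧ t₂ ≤ t ∧ W m t₂ = v

lemma R_refl (m t u : ℕ) : R m t u u := fun t₁ a b => ⟨t₁, le_rfl, a, b⟩

lemma R_cur (m t u : ℕ) : R m t u (W m t) := fun _ a _ => ⟨t, a, le_rfl, rfl⟩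

lemma R_succ {m t u v : ℕ} (hu : u ≠ W m (t + 1)) (H : R m t u v) : R m (t + 1) u v := by
  intro t₁ a b
  rcases Nat.lt_or_ge t t₁ with h1 | h1
  · have : t₁ = t + 1 := by omega
    subst this; exact absurd b.symm hu
  · obtain ⟨t₂, c, d, e⟩ := H t₁ h1 b
    exact ⟨t₂, c, by omega, e⟩

/-- The local recency relations are correct. -/
lemma rel_inv (m : ℕ) (hm : 0 < m) (t : ℕ) : ∀ j x y, x < 8 → y < 8 →
    rel ((conf m t).2 j) x y → R m t (7 * j + x) (7 * j + y) := by
  induction t with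
  | zero =>
    intro j x y hx hy H
    simp only [conf] at H
    have w0 : W m 0 = 0 := by simp [W, pos, conf, h_zero]
    by_cases hj : 7 * j + x = 0
    · have hx0 : x = h 0 := by
        have : h 0 = 0 := by rw [h_zero]; simp
        omega
      rw [hx0] at H
      have := rel_top 0 y hy H
      rw [this, ← hx0]; exact R_refl _ _ _
    · intro t₁ a b
      have : t₁ = 0 := by omega
      subst this; omega
  | succ t ih =>
    intro j x y hx hy H
    have ws := W_succ m t
    have I := inv m hm (t + 1)
    have e1 : (conf m (t + 1)).1 = nxt m (conf m t) := rfl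
    have e2 : (conf m (t + 1)).2 j = if j = nxt m (conf m t)
        then (conf m t).2 (nxt m (conf m t)) + 1 else (conf m t).2 j := by
      simp [conf, step, Function.update_apply]
    by_cases hj : j = nxt m (conf m t)
    · rw [e2, if_pos hj] at H
      rw [← hj] at ws H
      rcases rel_step _ x y hx hy H with h1 | ⟨h1, h2⟩
      · rw [h1, ← ws]; exact R_cur _ _ _
      · exact R_succ (by omega) (ih j x y hx hy h2)
    · by_cases hz : 7 * j + x = W m (t + 1)
      · have hh := h_lt ((conf m t).2 (nxt m (conf m t)) + 1)
        have hxx : x = h ((conf m (t + 1)).2 j) := by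
          rcases Nat.lt_or_gt_of_ne hj with h1 | h1
          · rw [I.left j (by omega)]; omega
          · rw [I.right j (by omega)]; omega
        rw [hxx] at H
        have := rel_top _ y hy H
        rw [this, ← hxx]; exact R_refl _ _ _
      · rw [e2, if_neg hj] at H
        exact R_succ hz (ih j x y hx hy H)

/-- When at a leaf of the active gadget, its only neighbour was visited just before. -/
lemma prev_inv (m : ℕ) (hm : 0 < m) (t y v : ℕ)
    (h1 : h ((conf m t).2 (conf m t).1) = 7 ∨
      (h ((conf m t).2 (conf m t).1) = 0 ∧ (conf m t).1 ≠ 0))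
    (H : E (h ((conf m t).2 (conf m t).1)) y) (hv : v ≠ W m t) :
    R m t v (7 * (conf m t).1 + y) := by
  cases t with
  | zero =>
    simp [conf, h_seven] at h1
  | succ t =>
    have e1 : (conf m (t + 1)).1 = nxt m (conf m t) := rfl
    have e2 : (conf m (t + 1)).2 (conf m (t + 1)).1 =
        (conf m t).2 (nxt m (conf m t)) + 1 := by
      simp [conf, step]
    rw [e2] at h1 H
    have := leaf_prev _ y (by tauto) H
    rw [this, e1, ← W_cur m hm t]
    exact R_succ hv (R_cur _ _ _)

/-- Adjacency in the chain. -/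
def A (m u v : ℕ) : Prop := ∃ j < m, ∃ x y, E x y ∧ u = 7 * j + x ∧ v = 7 * j + y

lemma W_adj (m : ℕ) (hm : 0 < m) (t : ℕ) : A m (W m t) (W m (t + 1)) :=
  ⟨_, nxt_lt m hm t, _, _, h_adj _, W_cur m hm t, W_succ m t⟩

lemma A_ne {m u v : ℕ} (H : A m u v) : u ≠ v := by
  obtain ⟨j, _, x, y, h1, rfl, rfl⟩ := H
  have := E_ne h1
  omega

lemma W_lrv (m : ℕ) (hm : 0 < m) (t u : ℕ) (H : A m (W m t) u) : R m t (W m (t + 1)) u := by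
  have hne := (A_ne (W_adj m hm t)).symm
  obtain ⟨j, hj, x, y, hxy, hx, rfl⟩ := H
  have wc := W_cur m hm t
  have hh := h_lt ((conf m t).2 (nxt m (conf m t)))
  have hl := E_lt hxy
  by_cases hjn : j = nxt m (conf m t)
  · have hx' : x = h ((conf m t).2 (nxt m (conf m t))) := by omega
    rw [hx'] at hxy
    rw [W_succ, hjn]
    exact rel_inv m hm t _ _ _ (h_lt _) hl.2 (h_lrv _ _ hxy)
  · have hw : W m t = 7 * (conf m t).1 + h ((conf m t).2 (conf m t).1) := rfl
    have I := inv m hm t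
    have hc := nxt_cases m (conf m t)
    have hji : j = (conf m t).1 := by
      have := I.lt
      have := I.left (nxt m (conf m t))
      have := I.right (nxt m (conf m t))
      omega
    have hx' : x = h ((conf m t).2 (conf m t).1) := by omega
    rw [hji]
    rw [hx'] at hxy
    exact prev_inv m hm t y _ (by omega) hxy hne

/-- The chain graph. -/
def G (m : ℕ) : SimpleGraph (Fin (7 * m + 1)) where
  Adj u v := A m u v
  symm := by
    constructor
    rintro u v ⟨j, hj, x, y, h1, h2, h3⟩
    exact ⟨j, hj, y, x, E_symm h1, h3, h2⟩
  loopless := by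
    constructor
    intro u H
    exact A_ne H rfl

lemma A_deg (m v : ℕ) : ∃ a b c, ∀ u, A m v u → u = a ∨ u = b ∨ u = c := by
  have h7 : v % 7 < 7 := Nat.mod_lt _ (by norm_num)
  obtain ⟨q, r, hr, rfl⟩ : ∃ q r, r < 7 ∧ v = 7 * q + r := ⟨v / 7, v % 7, h7, by omega⟩
  let nb : ℕ × ℕ × ℕ := match r with
    | 0 => (7 * q + 2, 7 * q - 4, 0)
    | 1 => (7 * q + 4, 7 * q + 5, 0)
    | 2 => (7 * q + 0, 7 * q + 4, 7 * q + 5)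
    | 3 => (7 * q + 4, 7 * q + 6, 7 * q + 7)
    | 4 => (7 * q + 2, 7 * q + 3, 7 * q + 1)
    | 5 => (7 * q + 2, 7 * q + 6, 7 * q + 1)
    | _ => (7 * q + 3, 7 * q + 5, 0)
  refine ⟨nb.1, nb.2.1, nb.2.2, ?_⟩
  rintro u ⟨j, hj, x, y, hxy, h1, rfl⟩
  simp [E, edges] at hxy
  interval_cases r <;> simp only [nb] <;> omega

lemma deg_le (m : ℕ) (v : Fin (7 * m + 1)) : {u | (G m).Adj v u}.ncard ≤ 3 := by
  obtain ⟨a, b, c, H⟩ := A_deg m v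
  have h1 : (Fin.val '' {u | (G m).Adj v u}) ⊆ {a, b, c} := by
    rintro _ ⟨u, hu, rfl⟩
    exact H u hu
  rw [← Set.ncard_image_of_injective _ Fin.val_injective]
  refine (Set.ncard_le_ncard h1 (Set.toFinite _)).trans ?_
  refine (Set.ncard_insert_le _ _).trans ?_
  have := Set.ncard_insert_le b {c}
  rw [Set.ncard_singleton] at this
  omega

lemma reach_local (m j : ℕ) (hj : j < m) (x : ℕ) (hx : x < 8) :
    (G m).Reachable ⟨7 * j, by omega⟩ ⟨7 * j + x, by omega⟩ := by
  have e : ∀ a b (ha : a < 8) (hb : b < 8), E a b →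
      (G m).Reachable ⟨7 * j + a, by omega⟩ ⟨7 * j + b, by omega⟩ := by
    intro a b ha hb hab
    exact SimpleGraph.Adj.reachable ⟨j, hj, a, b, hab, rfl, rfl⟩
  have r2 := e 0 2 (by omega) (by omega) (by decide)
  have r4 := r2.trans (e 2 4 (by omega) (by omega) (by decide))
  have r5 := r2.trans (e 2 5 (by omega) (by omega) (by decide))
  have r3 := r4.trans (e 4 3 (by omega) (by omega) (by decide))
  have r1 := r4.trans (e 4 1 (by omega) (by omega) (by decide))
  have r6 := r5.trans (e 5 6 (by omega) (by omega) (by decide))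
  have r7 := r3.trans (e 3 7 (by omega) (by omega) (by decide))
  interval_cases x
  · exact SimpleGraph.Reachable.refl _
  all_goals assumption

lemma reach_port (m j : ℕ) (hj : j ≤ m) :
    (G m).Reachable ⟨0, by omega⟩ ⟨7 * j, by omega⟩ := by
  induction j with
  | zero => exact SimpleGraph.Reachable.refl _
  | succ j ih => exact (ih (by omega)).trans (reach_local m j (by omega) 7 (by omega))

lemma reach (m : ℕ) (v : Fin (7 * m + 1)) : (G m).Reachable ⟨0, by omega⟩ v := by
  obtain ⟨v, hv⟩ := v
  by_cases h1 : v = 7 * m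
  · subst h1; exact reach_port m m le_rfl
  · have := (reach_port m (v / 7) (by omega)).trans
      (reach_local m (v / 7) (by omega) (v % 7) (by omega))
    have e : 7 * (v / 7) + v % 7 = v := by omega
    simpa only [e] using this

lemma conn (m : ℕ) : (G m).Connected :=
  { preconnected := fun u v => (reach m u).symm.trans (reach m v)
    nonempty := ⟨⟨0, by omega⟩⟩ }

end LRV

/-- There is a constant `c > 0` such that for infinitely many `n` there is a connected
simple graph on `n` vertices of maximum degree at most `3` and a walk following the
LRV-v (least-recently-visited vertex) policy whose cover time is at least `2 ^ (c * n)`. -/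
theorem lrv_v_exponential_lower_bound :
    ∃ c : ℝ, 0 < c ∧
      ∀ N : ℕ, ∃ n : ℕ, N ≤ n ∧
        ∃ G : SimpleGraph (Fin n),
          G.Connected ∧
          (∀ v : Fin n, {u : Fin n | G.Adj v u}.ncard ≤ 3) ∧
          ∃ w : ℕ → Fin n,
            -- `w` is a walk on `G`
            (∀ t : ℕ, G.Adj (w t) (w (t + 1))) ∧
            -- `w` follows the LRV-v policy
            (∀ t : ℕ, ∀ u : Fin n, G.Adj (w t) u →
              ∀ t₁ : ℕ, t₁ ≤ t → w t₁ = w (t + 1) →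
                ∃ t₂ : ℕ, t₁ ≤ t₂ ∧ t₂ ≤ t ∧ w t₂ = u) ∧
            -- the cover time of `w` is at least `2 ^ (c * n)`
            ∃ v : Fin n, ∀ t : ℕ, (t : ℝ) < (2 : ℝ) ^ (c * n) → w t ≠ v := by
  refine ⟨1 / 8, by norm_num, fun N => ?_⟩
  have hm : 0 < N + 1 := Nat.succ_pos N
  refine ⟨7 * (N + 1) + 1, by omega, LRV.G (N + 1), LRV.conn _, LRV.deg_le _,
    fun t => ⟨LRV.W (N + 1) t, LRV.W_le _ hm t⟩, fun t => LRV.W_adj _ hm t, ?_,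
    ⟨7 * (N + 1), by omega⟩, ?_⟩
  · intro t u hu t₁ ht₁ heq
    obtain ⟨t₂, a, b, c⟩ := LRV.W_lrv _ hm t u hu t₁ ht₁ (congrArg Fin.val heq)
    exact ⟨t₂, a, b, Fin.ext c⟩
  · intro t ht heq
    have h1 := LRV.W_end _ hm t (congrArg Fin.val heq)
    have h2 : (2 : ℝ) ^ (1 / 8 * ((7 * (N + 1) + 1 : ℕ) : ℝ)) ≤ (2 : ℝ) ^ ((N + 1 : ℕ) : ℝ) := by
      apply Real.rpow_le_rpow_of_exponent_le (by norm_num)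
      push_cast
      have : (0 : ℝ) ≤ N := Nat.cast_nonneg N
      linarith
    rw [Real.rpow_natCast] at h2
    have h3 : ((2 : ℝ) ^ (N + 1)) ≤ t := by exact_mod_cast h1
    linarith
end

section
/- For infinitely many natural numbers n there exist a finite connected simple graph G on n vertices with maximum degree at most 3 and a walk w on G following the LRV-e policy whose cover time is at least n·(n−6)/12. (In particular, the least-recently-visited-edge strategy can take time quadratic in n to explore a graph of maximum degree 3, such as the dual graph of a triangulation of a polygonal region.) -/
/-- Configuration step `(K, x, d)`: `K` explored gadgets, position `x`, direction `d`
(`0` = right, `1` = left). -/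
def lrvNext (m : ℕ) (s : ℕ × ℕ × ℕ) : ℕ × ℕ × ℕ :=
  if s.2.2 = 0 then
    if s.2.1 = 3 * m + 1 then (s.1, 3 * m, 1)
    else if s.2.1 % 3 = 0 then (s.1, s.2.1 + 1, 0)
    else if s.2.1 = 3 * s.1 + 1 then (s.1 + 1, s.2.1 + 2, 1)
    else (s.1, s.2.1 + 2, 0)
  else if s.2.1 = 1 then (s.1, 0, 0)
  else (s.1, s.2.1 - 1, 1)

def lrvState (m : ℕ) : ℕ → ℕ × ℕ × ℕ
  | 0 => (0, 0, 0)
  | t + 1 => lrvNext m (lrvState m t)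

/-- The walk `x` traverses the edge `{a, b}` at step `t`. -/
def Trav (x : ℕ → ℕ) (t a b : ℕ) : Prop :=
  (x t = a ∧ x (t + 1) = b) ∨ (x t = b ∧ x (t + 1) = a)

/-- Up to time `t`, the last traversal of `{a,b}` is no later than that of `{c,d}`. -/
def Old (x : ℕ → ℕ) (t a b c d : ℕ) : Prop :=
  ∀ t₁, t₁ < t → Trav x t₁ a b → ∃ t₂, t₁ ≤ t₂ ∧ t₂ < t ∧ Trav x t₂ c d

def Nev (x : ℕ → ℕ) (t a b : ℕ) : Prop := ∀ t₁, t₁ < t → ¬ Trav x t₁ a b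

theorem Old.step {x : ℕ → ℕ} {t a b c d : ℕ}
    (h : ¬ Trav x t c d → ¬ Trav x t a b ∧ Old x t a b c d) : Old x (t + 1) a b c d := by
  intro t₁ h1 h2
  by_cases hc : Trav x t c d
  · exact ⟨t, by omega, by omega, hc⟩
  · obtain ⟨h3, h4⟩ := h hc
    have : t₁ ≠ t := by rintro rfl; exact h3 h2
    obtain ⟨t₂, h5, h6, h7⟩ := h4 t₁ (by omega) h2
    exact ⟨t₂, h5, by omega, h7⟩

theorem Nev.old {x : ℕ → ℕ} {t a b c d : ℕ} (h : Nev x t a b) : Old x t a b c d :=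
  fun t₁ h1 h2 => absurd h2 (h t₁ h1)

theorem Nev.step {x : ℕ → ℕ} {t a b : ℕ}
    (h : ¬ Trav x t a b ∧ Nev x t a b) : Nev x (t + 1) a b := by
  intro t₁ h1 h2
  have : t₁ ≠ t := by rintro rfl; exact h.1 h2
  exact h.2 t₁ (by omega) h2

theorem Old.symm' {x : ℕ → ℕ} {t a b c d a' b' c' d' : ℕ} (h : Old x t a b c d)
    (h1 : (a' = a ∧ b' = b) ∨ (a' = b ∧ b' = a)) (h2 : (c' = c ∧ d' = d) ∨ (c' = d ∧ d' = c)) :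
    Old x t a' b' c' d' := by
  intro t₁ h3 h4
  obtain ⟨t₂, h5, h6, h7⟩ := h t₁ h3 (by unfold Trav at *; omega)
  exact ⟨t₂, h5, h6, by unfold Trav at *; omega⟩

theorem Old.rfl' {x : ℕ → ℕ} {t a b : ℕ} : Old x t a b a b :=
  fun t₁ h1 h2 => ⟨t₁, le_rfl, h1, h2⟩

/-- One step of the configuration, as a disjunction. -/
def Stp (m K x d K' x' d' : ℕ) : Prop :=
  (d = 0 ∧ x = 3 * m + 1 ∧ x' = 3 * m ∧ d' = 1 ∧ K' = K) ∨
  (d = 0 ∧ x % 3 = 0 ∧ x' = x + 1 ∧ d' = 0 ∧ K' = K) ∨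
  (d = 0 ∧ x % 3 = 1 ∧ x = 3 * K + 1 ∧ x ≠ 3 * m + 1 ∧ K' = K + 1 ∧ x' = x + 2 ∧ d' = 1) ∨
  (d = 0 ∧ x % 3 = 1 ∧ x ≠ 3 * K + 1 ∧ x ≠ 3 * m + 1 ∧ K' = K ∧ x' = x + 2 ∧ d' = 0) ∨
  (d = 1 ∧ x = 1 ∧ x' = 0 ∧ d' = 0 ∧ K' = K) ∨
  (d = 1 ∧ x ≠ 1 ∧ x' + 1 = x ∧ d' = 1 ∧ K' = K)

def Bas (m K x d : ℕ) : Prop :=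
  1 ≤ m ∧ K ≤ m ∧ ((d = 0 ∧ x ≤ 3 * K + 1 ∧ x % 3 ≠ 2) ∨ (d = 1 ∧ 1 ≤ x ∧ x ≤ 3 * K))

theorem stp_of_bas {m : ℕ} (s : ℕ × ℕ × ℕ) (h : Bas m s.1 s.2.1 s.2.2) :
    Stp m s.1 s.2.1 s.2.2 (lrvNext m s).1 (lrvNext m s).2.1 (lrvNext m s).2.2 := by
  obtain ⟨K, x, d⟩ := s
  unfold Bas at h
  dsimp only at h
  unfold Stp lrvNext
  dsimp only
  split_ifs <;> dsimp only
  · exact Or.inl (by omega)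
  · exact Or.inr (Or.inl (by omega))
  · exact Or.inr (Or.inr (Or.inl (by omega)))
  · exact Or.inr (Or.inr (Or.inr (Or.inl (by omega))))
  · exact Or.inr (Or.inr (Or.inr (Or.inr (Or.inl (by omega)))))
  · exact Or.inr (Or.inr (Or.inr (Or.inr (Or.inr (by omega)))))

theorem bas_step {m K x d K' x' d' : ℕ} (h : Bas m K x d) (hs : Stp m K x d K' x' d') :
    Bas m K' x' d' := by
  unfold Bas at h ⊢
  unfold Stp at hs
  omega

theorem lrv_bas (m : ℕ) [NeZero m] (t : ℕ) :
    Bas m (lrvState m t).1 (lrvState m t).2.1 (lrvState m t).2.2 := by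
  induction t with
  | zero => simp [lrvState, Bas, Nat.one_le_iff_ne_zero, NeZero.ne m]
  | succ t ih => exact bas_step ih (stp_of_bas _ ih)

theorem lrv_stp (m : ℕ) [NeZero m] (t : ℕ) :
    Stp m (lrvState m t).1 (lrvState m t).2.1 (lrvState m t).2.2
      (lrvState m (t + 1)).1 (lrvState m (t + 1)).2.1 (lrvState m (t + 1)).2.2 :=
  stp_of_bas _ (lrv_bas m t)

def lrvG : ℕ → ℕ
  | 0 => 0
  | k + 1 => lrvG k + 3 * k + 3

theorem lrvG_eq (k : ℕ) : 2 * lrvG k = 3 * k * (k + 1) := by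
  induction k with
  | zero => rfl
  | succ k ih => simp only [lrvG]; nlinarith

theorem lrv_time (m : ℕ) [NeZero m] (t : ℕ) :
    ((lrvState m t).2.2 = 0 → lrvG (lrvState m t).1 ≤ t) ∧
    ((lrvState m t).2.2 = 1 → lrvG (lrvState m t).1 ≤ t + (lrvState m t).2.1) := by
  induction t with
  | zero => simp [lrvState, lrvG]
  | succ t ih =>
    have hs := lrv_stp m t
    generalize lrvState m t = s at *
    generalize lrvState m (t + 1) = s' at *
    obtain ⟨K, x, d⟩ := s
    obtain ⟨K', x', d'⟩ := s'
    simp only [Stp] at *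
    rcases hs with h | h | h | h | h | h
    all_goals (obtain ⟨h1, h2⟩ := ih)
    case inr.inr.inl =>
      obtain ⟨_, _, _, _, rfl, _, _⟩ := h
      simp only [lrvG]
      omega
    all_goals (have : K' = K := by omega)
    all_goals (subst this; omega)

/-- The invariant for gadget `j` (vertices `3j+1, 3j+2, 3j+3`). -/
structure LrvInv (x : ℕ → ℕ) (t K d j : ℕ) : Prop where
  n1 : K ≤ j → Nev x t (3 * j + 1) (3 * j + 3)
  n2 : K ≤ j → Nev x t (3 * j + 1) (3 * j + 2)
  n3 : K ≤ j → Nev x t (3 * j + 2) (3 * j + 3)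
  n4 : K ≤ j → Nev x t (3 * j + 3) (3 * j + 4)
  c1 : j < K → (3 * j + 3 ≤ x t ∨ (d = 1 ∧ 3 * j + 1 ≤ x t)) → Old x t (3 * j) (3 * j + 1) (3 * j + 1) (3 * j + 3)
  c2 : j < K → d = 1 ∧ x t = 3 * j + 1 → Old x t (3 * j) (3 * j + 1) (3 * j + 1) (3 * j + 2)
  c3 : j < K → d = 1 ∧ x t = 3 * j + 2 → Old x t (3 * j + 1) (3 * j + 2) (3 * j + 2) (3 * j + 3)
  c4 : j < K → ((d = 0 ∧ x t ≤ 3 * j + 3) ∨ (d = 1 ∧ x t ≤ 3 * j + 2)) → Old x t (3 * j + 3) (3 * j + 4) (3 * j + 2) (3 * j + 3)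
  c5 : j < K → d = 0 ∧ x t = 3 * j + 3 → Old x t (3 * j + 3) (3 * j + 4) (3 * j + 1) (3 * j + 3)
  c6 : j < K → 3 * j + 3 ≤ x t → Old x t (3 * j + 2) (3 * j + 3) (3 * j + 1) (3 * j + 3)
  c7 : j < K → ((d = 0 ∧ 3 * j + 4 ≤ x t) ∨ (d = 1 ∧ 3 * j + 3 ≤ x t)) → Old x t (3 * j + 2) (3 * j + 3) (3 * j + 3) (3 * j + 4)
  c8 : j < K → x t ≤ 3 * j + 1 → Old x t (3 * j + 1) (3 * j + 3) (3 * j + 1) (3 * j + 2)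
  c9 : j < K → ((d = 0 ∧ x t ≤ 3 * j + 1) ∨ (d = 1 ∧ x t ≤ 3 * j)) → Old x t (3 * j + 1) (3 * j + 3) (3 * j) (3 * j + 1)

theorem inv_step {m : ℕ} {x : ℕ → ℕ} {t K d K' d' j : ℕ} (hb : Bas m K (x t) d)
    (hs : Stp m K (x t) d K' (x (t + 1)) d') (h : LrvInv x t K d j) : LrvInv x (t + 1) K' d' j := by
  unfold Bas at hb
  unfold Stp at hs
  constructor
  · exact fun hj => Nev.step ⟨by unfold Trav; omega, h.n1 (by omega)⟩
  · exact fun hj => Nev.step ⟨by unfold Trav; omega, h.n2 (by omega)⟩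
  · exact fun hj => Nev.step ⟨by unfold Trav; omega, h.n3 (by omega)⟩
  · exact fun hj => Nev.step ⟨by unfold Trav; omega, h.n4 (by omega)⟩
  · intro hj hc
    refine Old.step fun hf => ?_
    unfold Trav at hf ⊢
    refine ⟨by omega, ?_⟩
    exact h.c1 (by omega) (by omega)
  · intro hj hc
    refine Old.step fun hf => ?_
    unfold Trav at hf ⊢
    refine ⟨by omega, ?_⟩
    exact h.c2 (by omega) (by omega)
  · intro hj hc
    refine Old.step fun hf => ?_
    unfold Trav at hf ⊢
    refine ⟨by omega, ?_⟩
    by_cases hK : K ≤ j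
    · exact (h.n2 hK).old
    · exact h.c3 (by omega) (by omega)
  · intro hj hc
    refine Old.step fun hf => ?_
    unfold Trav at hf ⊢
    refine ⟨by omega, ?_⟩
    by_cases hK : K ≤ j
    · exact (h.n4 hK).old
    · exact h.c4 (by omega) (by omega)
  · intro hj hc
    refine Old.step fun hf => ?_
    unfold Trav at hf ⊢
    refine ⟨by omega, ?_⟩
    by_cases hK : K ≤ j
    · exact (h.n4 hK).old
    · exact h.c5 (by omega) (by omega)
  · intro hj hc
    refine Old.step fun hf => ?_
    unfold Trav at hf ⊢
    refine ⟨by omega, ?_⟩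
    by_cases hK : K ≤ j
    · exact (h.n3 hK).old
    · exact h.c6 (by omega) (by omega)
  · intro hj hc
    refine Old.step fun hf => ?_
    unfold Trav at hf ⊢
    refine ⟨by omega, ?_⟩
    by_cases hK : K ≤ j
    · exact (h.n3 hK).old
    · exact h.c7 (by omega) (by omega)
  · intro hj hc
    refine Old.step fun hf => ?_
    unfold Trav at hf ⊢
    refine ⟨by omega, ?_⟩
    by_cases hK : K ≤ j
    · exact (h.n1 hK).old
    · exact h.c8 (by omega) (by omega)
  · intro hj hc
    refine Old.step fun hf => ?_
    unfold Trav at hf ⊢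
    refine ⟨by omega, ?_⟩
    by_cases hK : K ≤ j
    · exact (h.n1 hK).old
    · exact h.c9 (by omega) (by omega)

theorem lrv_inv (m : ℕ) [NeZero m] (t j : ℕ) :
    LrvInv (fun t => (lrvState m t).2.1) t (lrvState m t).1 (lrvState m t).2.2 j := by
  induction t with
  | zero =>
    constructor
    all_goals first
      | exact fun _ t₁ h => absurd h (Nat.not_lt_zero _)
      | exact fun _ _ t₁ h => absurd h (Nat.not_lt_zero _)
  | succ t ih => exact inv_step (m := m) (lrv_bas m t) (lrv_stp m t) ih

def lrvAdj (x y : ℕ) : Prop :=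
  y = x + 1 ∨ x = y + 1 ∨ (x % 3 = 1 ∧ y = x + 2) ∨ (y % 3 = 1 ∧ x = y + 2)

theorem lrv_adj (m : ℕ) [NeZero m] (t : ℕ) : lrvAdj (lrvState m t).2.1 (lrvState m (t + 1)).2.1 := by
  have hs := lrv_stp m t
  have hb := lrv_bas m t
  unfold Stp at hs
  unfold Bas at hb
  unfold lrvAdj
  omega

theorem lrv_policy (m : ℕ) [NeZero m] (t u : ℕ) (hu : u < 3 * m + 2) (ha : lrvAdj (lrvState m t).2.1 u) :
    Old (fun t => (lrvState m t).2.1) t (lrvState m t).2.1 (lrvState m (t + 1)).2.1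
      (lrvState m t).2.1 u := by
  have hs := lrv_stp m t
  have hb := lrv_bas m t
  have hi := lrv_inv m t
  generalize hx : (fun t => (lrvState m t).2.1) = x at *
  have e1 : (lrvState m t).2.1 = x t := by rw [← hx]
  have e2 : (lrvState m (t + 1)).2.1 = x (t + 1) := by rw [← hx]
  rw [e1] at ha hs hb
  rw [e2] at hs
  rw [e1, e2]
  clear e1 e2 hx
  generalize (lrvState m t).1 = K at *
  generalize (lrvState m t).2.2 = d at *
  generalize (lrvState m (t + 1)).1 = K' at *
  generalize (lrvState m (t + 1)).2.2 = d' at *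
  by_cases hy : x (t + 1) = u
  · rw [hy]; exact Old.rfl'
  unfold Stp at hs
  unfold Bas at hb
  unfold lrvAdj at ha
  obtain ⟨j, hj⟩ : ∃ j, x t = 0 ∨ x t = 3 * j + 1 ∨ x t = 3 * j + 2 ∨ x t = 3 * j + 3 :=
    ⟨(x t - 1) / 3, by omega⟩
  specialize hi j
  rcases hj with hj | hj | hj | hj
  · omega
  · by_cases hd : d = 0
    · by_cases hK : K ≤ j
      · exact (hi.n1 hK).old.symm' (c := x t) (d := u) (by omega) (by omega)
      · by_cases hv : u = 3 * j
        · exact (hi.c9 (by omega) (by omega)).symm' (by omega) (by omega)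
        · exact (hi.c8 (by omega) (by omega)).symm' (by omega) (by omega)
    · by_cases hv : u = 3 * j + 3
      · exact (hi.c1 (by omega) (by omega)).symm' (by omega) (by omega)
      · exact (hi.c2 (by omega) (by omega)).symm' (by omega) (by omega)
  · exact (hi.c3 (by omega) (by omega)).symm' (by omega) (by omega)
  · by_cases hd : d = 0
    · by_cases hv : u = 3 * j + 1
      · exact (hi.c5 (by omega) (by omega)).symm' (by omega) (by omega)
      · exact (hi.c4 (by omega) (by omega)).symm' (by omega) (by omega)
    · by_cases hv : u = 3 * j + 1
      · exact (hi.c6 (by omega) (by omega)).symm' (by omega) (by omega)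
      · exact (hi.c7 (by omega) (by omega)).symm' (by omega) (by omega)

def lrvGraph (n : ℕ) : SimpleGraph (Fin n) where
  Adj a b := lrvAdj a.1 b.1
  symm := ⟨fun a b h => by unfold lrvAdj at *; omega⟩
  loopless := ⟨fun a h => by unfold lrvAdj at h; omega⟩

theorem lrvGraph_connected (n : ℕ) : (lrvGraph (n + 1)).Connected := by
  have key : ∀ k (hk : k < n + 1), (lrvGraph (n + 1)).Reachable ⟨0, by omega⟩ ⟨k, hk⟩ := by
    intro k
    induction k with
    | zero => intro _; exact SimpleGraph.Reachable.refl _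
    | succ k ih =>
      intro hk
      refine (ih (by omega)).trans (SimpleGraph.Adj.reachable ?_)
      exact Or.inl rfl
  have : Nonempty (Fin (n + 1)) := ⟨0⟩
  exact ⟨fun a b => (key a.1 a.2).symm.trans (key b.1 b.2)⟩

theorem lrvGraph_degree (n : ℕ) (v : Fin n) : {u : Fin n | (lrvGraph n).Adj v u}.ncard ≤ 3 := by
  have h1 : {u : Fin n | (lrvGraph n).Adj v u}.ncard
      = (Fin.val '' {u : Fin n | (lrvGraph n).Adj v u}).ncard :=
    (Set.ncard_image_of_injective _ Fin.val_injective).symm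
  rw [h1]
  let F : Finset ℕ := {v.1 - 1, v.1 + 1, if v.1 % 3 = 1 then v.1 + 2 else v.1 - 2}
  have h2 : (Fin.val '' {u : Fin n | (lrvGraph n).Adj v u}) ⊆ (F : Set ℕ) := by
    rintro _ ⟨u, hu, rfl⟩
    change lrvAdj v.1 u.1 at hu
    unfold lrvAdj at hu
    simp only [F, Finset.coe_insert, Finset.coe_singleton, Set.mem_insert_iff,
      Set.mem_singleton_iff]
    split_ifs <;> omega
  refine (Set.ncard_le_ncard h2 (Finset.finite_toSet F)).trans ?_
  rw [Set.ncard_coe_finset]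
  exact Finset.card_le_three


/-- For infinitely many `n` there is a connected simple graph on `n` vertices of maximum
degree at most `3` and a walk following the LRV-e (least-recently-visited edge) policy
whose cover time is at least `n * (n - 6) / 12`. -/
theorem lrv_e_quadratic_lower_bound :
    ∀ N : ℕ, ∃ n : ℕ, N ≤ n ∧
      ∃ G : SimpleGraph (Fin n),
        G.Connected ∧
        (∀ v : Fin n, {u : Fin n | G.Adj v u}.ncard ≤ 3) ∧
        ∃ w : ℕ → Fin n,
          -- `w` is a walk on `G`
          (∀ t : ℕ, G.Adj (w t) (w (t + 1))) ∧
          -- `w` follows the LRV-e policy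
          (∀ t : ℕ, ∀ u : Fin n, G.Adj (w t) u →
            ∀ t₁ : ℕ, t₁ < t → s(w t₁, w (t₁ + 1)) = s(w t, w (t + 1)) →
              ∃ t₂ : ℕ, t₁ ≤ t₂ ∧ t₂ < t ∧ s(w t₂, w (t₂ + 1)) = s(w t, u)) ∧
          -- the cover time of `w` is at least `n * (n - 6) / 12`
          ∃ v : Fin n, ∀ t : ℕ, (t : ℝ) < (n : ℝ) * ((n : ℝ) - 6) / 12 → w t ≠ v := by
  intro N
  have hlt : ∀ t, (lrvState (N + 1) t).2.1 < 3 * (N + 1) + 1 + 1 := by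
    intro t
    have hb := lrv_bas (N + 1) t
    unfold Bas at hb
    omega
  refine ⟨3 * (N + 1) + 1 + 1, by omega, lrvGraph _, lrvGraph_connected _, lrvGraph_degree _,
    fun t => ⟨(lrvState (N + 1) t).2.1, hlt t⟩, fun t => lrv_adj (N + 1) t, ?_, ⟨3 * (N + 1) + 1, by omega⟩, ?_⟩
  · intro t u hu t₁ ht he
    have key := lrv_policy (N + 1) t u.1 u.2 hu t₁ ht
      (by simpa [Sym2.eq_iff, Fin.ext_iff, Trav] using he)
    obtain ⟨t₂, h1, h2, h3⟩ := key
    exact ⟨t₂, h1, h2, by simpa [Sym2.eq_iff, Fin.ext_iff, Trav] using h3⟩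
  · intro t ht he
    have he' : (lrvState (N + 1) t).2.1 = 3 * (N + 1) + 1 := congrArg Fin.val he
    have hb := lrv_bas (N + 1) t
    have h1 := (lrv_time (N + 1) t).1
    unfold Bas at hb
    have hK : (lrvState (N + 1) t).1 = N + 1 := by omega
    have h2 := h1 (by omega)
    rw [hK] at h2
    have h3 := lrvG_eq (N + 1)
    have h4 : 3 * (N + 1) * (N + 1 + 1) ≤ 2 * t := by omega
    have h5 : (3 : ℝ) * (N + 1) * (N + 1 + 1) ≤ 2 * t := by exact_mod_cast h4
    push_cast at ht
    have h6 : (0 : ℝ) ≤ N := Nat.cast_nonneg N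
    nlinarith
end

section
/- Let G be a finite simple graph, let w be a walk on G following the LFV-v policy with starting vertex s = w(0), and let δ = deg(s) ≥ 1 be the number of neighbors of s. For any time t ∈ ℕ, let g = |{t' ∈ ℕ : t' < t and w(t') = s}| be the number of visits to s that the walk has already left by time t. Then at least (g mod δ) of the neighbors u of s satisfy freq_w(u,t) ≥ ⌊g/δ⌋ + 1, and every neighbor u of s satisfies freq_w(u,t) ≥ ⌊g/δ⌋. -/
/-- For a walk `w` following the LFV-v policy starting at `s = w 0` with `δ = deg s ≥ 1`,
if `g` is the number of visits to `s` strictly before time `t`, then at least `g % δ`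
neighbors of `s` have visit count at least `g / δ + 1` up to time `t`, and every neighbor
of `s` has visit count at least `g / δ` up to time `t`. -/
theorem lfv_v_neighbor_frequencies {V : Type*} [Fintype V] (G : SimpleGraph V)
    (w : ℕ → V)
    -- `w` is a walk on `G`
    (hwalk : ∀ t : ℕ, G.Adj (w t) (w (t + 1)))
    -- `w` follows the LFV-v policy
    (hpol : ∀ t : ℕ, ∀ u : V, G.Adj (w t) u →
      {t' : ℕ | t' ≤ t ∧ w t' = w (t + 1)}.ncard ≤ {t' : ℕ | t' ≤ t ∧ w t' = u}.ncard)
    (s : V) (hs : w 0 = s)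
    (δ : ℕ) (hδ : δ = {u : V | G.Adj s u}.ncard) (hδ1 : 1 ≤ δ)
    (t : ℕ) (g : ℕ) (hg : g = {t' : ℕ | t' < t ∧ w t' = s}.ncard) :
    g % δ ≤
      {u : V | G.Adj s u ∧ g / δ + 1 ≤ {t' : ℕ | t' ≤ t ∧ w t' = u}.ncard}.ncard ∧
    ∀ u : V, G.Adj s u → g / δ ≤ {t' : ℕ | t' ≤ t ∧ w t' = u}.ncard := by
  have hfin : ∀ (t : ℕ) (u : V), {t' : ℕ | t' ≤ t ∧ w t' = u}.Finite := fun t u =>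
    (Set.finite_Iic t).subset fun x hx => hx.1
  have hmono : ∀ (t : ℕ) (u : V),
      {t' : ℕ | t' ≤ t ∧ w t' = u}.ncard ≤ {t' : ℕ | t' ≤ t + 1 ∧ w t' = u}.ncard := fun t u =>
    Set.ncard_le_ncard (fun x hx => ⟨Nat.le_succ_of_le hx.1, hx.2⟩) (hfin _ _)
  have hstep : ∀ t : ℕ, {t' : ℕ | t' ≤ t + 1 ∧ w t' = w (t + 1)}.ncard
      = {t' : ℕ | t' ≤ t ∧ w t' = w (t + 1)}.ncard + 1 := by
    intro t
    have h : {t' : ℕ | t' ≤ t + 1 ∧ w t' = w (t + 1)}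
        = insert (t + 1) {t' : ℕ | t' ≤ t ∧ w t' = w (t + 1)} := by
      ext x
      simp only [Set.mem_setOf_eq, Set.mem_insert_iff]
      constructor
      · rintro ⟨h1, h2⟩
        by_cases hx : x = t + 1
        · exact Or.inl hx
        · exact Or.inr ⟨by omega, h2⟩
      · rintro (rfl | ⟨h1, h2⟩)
        · exact ⟨le_rfl, rfl⟩
        · exact ⟨by omega, h2⟩
    rw [h, Set.ncard_insert_of_notMem _ (hfin _ _)]
    simp
  induction t generalizing g with
  | zero =>
    have : g = 0 := by rw [hg]; simp
    subst this
    simp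
  | succ t ih =>
    obtain ⟨ih1, ih2⟩ := ih _ rfl
    by_cases hw : w t = s
    · have hg' : g = {t' : ℕ | t' < t ∧ w t' = s}.ncard + 1 := by
        have h : {t' : ℕ | t' < t + 1 ∧ w t' = s} = insert t {t' : ℕ | t' < t ∧ w t' = s} := by
          ext x
          simp only [Set.mem_setOf_eq, Set.mem_insert_iff]
          constructor
          · rintro ⟨h1, h2⟩
            by_cases hx : x = t
            · exact Or.inl hx
            · exact Or.inr ⟨by omega, h2⟩
          · rintro (rfl | ⟨h1, h2⟩)
            · exact ⟨by omega, hw⟩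
            · exact ⟨by omega, h2⟩
        rw [hg, h, Set.ncard_insert_of_notMem _ ((Set.finite_Iio t).subset fun x hx => hx.1)]
        simp
      generalize {t' : ℕ | t' < t ∧ w t' = s}.ncard = g0 at *
      clear hg
      have hadj : G.Adj s (w (t + 1)) := hw ▸ hwalk t
      have hp := hpol t
      rw [hw] at hp
      have hr : g0 % δ < δ := Nat.mod_lt _ hδ1
      -- the key count at time t + 1
      have key : g0 % δ + 1 ≤ {u : V | G.Adj s u ∧
          g0 / δ + 1 ≤ {t' : ℕ | t' ≤ t + 1 ∧ w t' = u}.ncard}.ncard := by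
        by_cases hv : g0 / δ + 1 ≤ {t' : ℕ | t' ≤ t ∧ w t' = w (t + 1)}.ncard
        · have : {u : V | G.Adj s u} ⊆ {u : V | G.Adj s u ∧
              g0 / δ + 1 ≤ {t' : ℕ | t' ≤ t + 1 ∧ w t' = u}.ncard} := fun u hu =>
            ⟨hu, (hv.trans (hp u hu)).trans (hmono t u)⟩
          have := Set.ncard_le_ncard this (Set.toFinite _)
          omega
        · have hsub : insert (w (t + 1)) {u : V | G.Adj s u ∧
              g0 / δ + 1 ≤ {t' : ℕ | t' ≤ t ∧ w t' = u}.ncard} ⊆ {u : V | G.Adj s u ∧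
              g0 / δ + 1 ≤ {t' : ℕ | t' ≤ t + 1 ∧ w t' = u}.ncard} := by
            rintro u (rfl | ⟨h1, h2⟩)
            · refine ⟨hadj, ?_⟩
              rw [hstep]
              exact Nat.succ_le_succ (ih2 _ hadj)
            · exact ⟨h1, h2.trans (hmono t u)⟩
          have h := Set.ncard_le_ncard hsub (Set.toFinite _)
          rw [Set.ncard_insert_of_notMem (fun h => hv h.2) (Set.toFinite _)] at h
          omega
      have hdm := Nat.div_add_mod g0 δ
      by_cases hlast : g0 % δ + 1 = δ
      · have hge : g = δ * (g0 / δ + 1) := by rw [hg', Nat.mul_add]; omega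
        have hd : g / δ = g0 / δ + 1 := by
          rw [hge]; exact Nat.mul_div_cancel_left _ hδ1
        have hm : g % δ = 0 := by rw [hge]; exact Nat.mul_mod_right _ _
        rw [hm, hd]
        refine ⟨Nat.zero_le _, fun u hu => ?_⟩
        have heq := Set.eq_of_subset_of_ncard_le (s := {u : V | G.Adj s u ∧
          g0 / δ + 1 ≤ {t' : ℕ | t' ≤ t + 1 ∧ w t' = u}.ncard}) (t := {u : V | G.Adj s u})
          (fun x hx => hx.1) (by omega) (Set.toFinite _)
        have hu' : u ∈ {u : V | G.Adj s u} := hu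
        rw [← heq] at hu'
        exact hu'.2
      · have hge : g = (g0 % δ + 1) + δ * (g0 / δ) := by omega
        have hlt : g0 % δ + 1 < δ := by omega
        have hd : g / δ = g0 / δ := by
          rw [hge, Nat.add_mul_div_left _ _ hδ1, Nat.div_eq_of_lt hlt, Nat.zero_add]
        have hm : g % δ = g0 % δ + 1 := by
          rw [hge, Nat.add_mul_mod_self_left, Nat.mod_eq_of_lt hlt]
        rw [hm, hd]
        exact ⟨key, fun u hu => (ih2 u hu).trans (hmono t u)⟩
    · have h : {t' : ℕ | t' < t + 1 ∧ w t' = s} = {t' : ℕ | t' < t ∧ w t' = s} := by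
        ext x
        simp only [Set.mem_setOf_eq]
        constructor
        · rintro ⟨h1, h2⟩
          refine ⟨?_, h2⟩
          rcases Nat.lt_succ_iff_lt_or_eq.mp h1 with h | rfl
          · exact h
          · exact absurd h2 hw
        · rintro ⟨h1, h2⟩
          exact ⟨by omega, h2⟩
      rw [h] at hg
      rw [← hg] at ih1 ih2
      exact ⟨ih1.trans (Set.ncard_le_ncard (fun u hu => ⟨hu.1, hu.2.trans (hmono t u)⟩)
        (Set.toFinite _)), fun u hu => (ih2 u hu).trans (hmono t u)⟩
end

section
/- Let G be a finite connected simple graph with maximum degree δ and diameter d, and let w be a walk on G following the LFV-v policy. For any time t ∈ ℕ, if some vertex v of G is still unvisited at time t (that is, w(t') ≠ v for all t' ≤ t), then every vertex u of G satisfies freq_w(u,t) ≤ (δ+1)^d. (This is the paper's bound of order δ^d on the highest visit frequency of any node while some node remains unvisited under LFV-v.) -/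
open Classical in
/-- One step: if `y` is a neighbour of `x` visited at most `F` times, then `x` is visited at most
`δ * (F + 1) + 1` times. -/
theorem lfv_step {V : Type*} [Fintype V] (G : SimpleGraph V) (δ : ℕ)
    (hδ : ∀ v : V, {u : V | G.Adj v u}.ncard ≤ δ) (w : ℕ → V)
    (hwalk : ∀ t : ℕ, G.Adj (w t) (w (t + 1)))
    (hpol : ∀ t : ℕ, ∀ u : V, G.Adj (w t) u →
      {t' : ℕ | t' ≤ t ∧ w t' = w (t + 1)}.ncard ≤ {t' : ℕ | t' ≤ t ∧ w t' = u}.ncard)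
    (t : ℕ) (x y : V) (hxy : G.Adj x y) (F : ℕ)
    (hF : {t' : ℕ | t' ≤ t ∧ w t' = y}.ncard ≤ F) :
    {t' : ℕ | t' ≤ t ∧ w t' = x}.ncard ≤ δ * (F + 1) + 1 := by
  have fin : ∀ (s : ℕ) (z : V), {t' : ℕ | t' ≤ s ∧ w t' = z}.Finite := fun s z =>
    (Set.finite_Iic s).subset fun a ha => ha.1
  have mono : ∀ (s r : ℕ) (z : V), s ≤ r →
      {t' : ℕ | t' ≤ s ∧ w t' = z}.ncard ≤ {t' : ℕ | t' ≤ r ∧ w t' = z}.ncard :=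
    fun s r z h => Set.ncard_le_ncard (fun a ha => ⟨ha.1.trans h, ha.2⟩) (fin r z)
  have strict : ∀ (s r : ℕ), s < r →
      {t' : ℕ | t' ≤ s ∧ w t' = w (s + 1)}.ncard < {t' : ℕ | t' ≤ r ∧ w t' = w (s + 1)}.ncard := by
    intro s r h
    apply Set.ncard_lt_ncard _ (fin r _)
    refine ⟨fun a ha => ⟨ha.1.trans h.le, ha.2⟩, fun hsub => ?_⟩
    have := (hsub (show s + 1 ∈ _ from ⟨h, rfl⟩)).1
    omega
  have hsub : {t' : ℕ | t' ≤ t ∧ w t' = x} ⊆ insert t {t' : ℕ | t' < t ∧ w t' = x} := by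
    rintro a ⟨ha, hb⟩
    rcases ha.eq_or_lt with h | h
    · exact Or.inl h
    · exact Or.inr ⟨h, hb⟩
  have fin2 : {t' : ℕ | t' < t ∧ w t' = x}.Finite := (fin t x).subset fun a ha => ⟨ha.1.le, ha.2⟩
  refine (Set.ncard_le_ncard hsub (fin2.insert t)).trans ((Set.ncard_insert_le _ _).trans ?_)
  gcongr
  have key : {t' : ℕ | t' < t ∧ w t' = x}.ncard ≤
      ({u : V | G.Adj x u} ×ˢ (Set.Iic F : Set ℕ)).ncard := by
    refine Set.ncard_le_ncard_of_injOn
      (fun s => (w (s + 1), {t' : ℕ | t' ≤ s ∧ w t' = w (s + 1)}.ncard)) ?_ ?_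
      ((Set.toFinite _).prod (Set.finite_Iic F))
    · rintro s ⟨hs, hx⟩
      refine ⟨?_, ?_⟩
      · have := hwalk s
        rw [hx] at this
        exact this
      · exact (hpol s y (hx ▸ hxy)).trans ((mono s t y hs.le).trans hF)
    · rintro s ⟨hs, hx⟩ r ⟨hr, hx'⟩ h
      simp only [Prod.mk.injEq] at h
      obtain ⟨h1, h2⟩ := h
      rcases lt_trichotomy s r with h | h | h
      · have := strict s r h
        rw [h2, h1] at this
        exact absurd this (lt_irrefl _)
      · exact h
      · have := strict r s h
        rw [← h2, ← h1] at this
        exact absurd this (lt_irrefl _)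
  rw [Set.ncard_prod] at key
  have hc : (Set.Iic F : Set ℕ).ncard = F + 1 := by
    rw [← Finset.coe_Iic, Set.ncard_coe_finset, Nat.card_Iic]
  rw [hc] at key
  exact key.trans (Nat.mul_le_mul_right _ (hδ x))

/-- If `G` is a finite connected simple graph with maximum degree `δ` and diameter `d`,
`w` is a walk on `G` following the LFV-v policy, and some vertex `v` is still unvisited
at time `t`, then every vertex has visit count at most `(δ + 1) ^ d` up to time `t`. -/
theorem lfv_v_frequency_upper_bound {V : Type*} [Fintype V] (G : SimpleGraph V)
    (hconn : G.Connected)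
    -- `δ` is the maximum degree of `G`
    (δ : ℕ) (hδ : IsGreatest {k : ℕ | ∃ v : V, {u : V | G.Adj v u}.ncard = k} δ)
    -- `d` is the diameter of `G`
    (d : ℕ) (hd : IsGreatest {k : ℕ | ∃ u v : V, G.dist u v = k} d)
    (w : ℕ → V)
    -- `w` is a walk on `G`
    (hwalk : ∀ t : ℕ, G.Adj (w t) (w (t + 1)))
    -- `w` follows the LFV-v policy
    (hpol : ∀ t : ℕ, ∀ u : V, G.Adj (w t) u →
      {t' : ℕ | t' ≤ t ∧ w t' = w (t + 1)}.ncard ≤ {t' : ℕ | t' ≤ t ∧ w t' = u}.ncard)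
    (t : ℕ) (v : V)
    -- `v` is still unvisited at time `t`
    (hv : ∀ t' : ℕ, t' ≤ t → w t' ≠ v) :
    ∀ u : V, {t' : ℕ | t' ≤ t ∧ w t' = u}.ncard ≤ (δ + 1) ^ d := by
  have hδ' : ∀ v : V, {u : V | G.Adj v u}.ncard ≤ δ := fun v => hδ.2 ⟨v, rfl⟩
  have hv0 : {t' : ℕ | t' ≤ t ∧ w t' = v}.ncard = 0 := by
    have : {t' : ℕ | t' ≤ t ∧ w t' = v} = ∅ := by
      ext a
      simpa using hv a
    rw [this, Set.ncard_empty]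
  have main : ∀ (n : ℕ) (x : V) (p : G.Walk x v), p.length = n →
      x = v ∨ ({t' : ℕ | t' ≤ t ∧ w t' = x}.ncard ≤ (δ + 1) ^ n ∧ 1 ≤ n) := by
    intro n
    induction n with
    | zero => exact fun x p hp => Or.inl (SimpleGraph.Walk.eq_of_length_eq_zero hp)
    | succ n ih =>
      intro x p hp
      right
      refine ⟨?_, by omega⟩
      cases p with
      | nil => simp at hp
      | @cons _ y _ hxy q =>
        rcases ih y q (by simpa using hp) with h | ⟨h, hn⟩
        · subst h
          have := lfv_step G δ hδ' w hwalk hpol t x _ hxy 0 hv0.le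
          have h2 : (δ + 1) ^ 1 ≤ (δ + 1) ^ (n + 1) := Nat.pow_le_pow_right (by omega) (by omega)
          rw [pow_one] at h2
          omega
        · have := lfv_step G δ hδ' w hwalk hpol t x _ hxy _ h
          have h2 : (δ + 1) ^ 1 ≤ (δ + 1) ^ n := Nat.pow_le_pow_right (by omega) hn
          rw [pow_succ]
          nlinarith
  intro u
  obtain ⟨p, hp⟩ := hconn.exists_walk_length_eq_dist u v
  rcases main _ u p hp with h | h
  · rw [h, hv0]
    exact Nat.zero_le _
  · exact h.1.trans (Nat.pow_le_pow_right (by omega) (hd.2 ⟨u, v, rfl⟩))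
end

section
/- Let G be a finite connected simple graph with n vertices, maximum degree δ, and diameter d, and let w be a walk on G following the LFV-v policy. Then w covers G within n·(δ+1)^d steps: for every vertex v of G there exists a time t ≤ n·(δ+1)^d with w(t) = v. (This is the paper's upper bound of order n·δ^d on the exploration time of LFV-v.) -/
open Classical in
/-- visit count up to time `t` -/
noncomputable def lfvFreq {V : Type*} (w : ℕ → V) (y : V) (t : ℕ) : ℕ :=
  ((Finset.range (t + 1)).filter (fun s => w s = y)).card

theorem lfvFreq_eq {V : Type*} (w : ℕ → V) (y : V) (t : ℕ) :
    {t' : ℕ | t' ≤ t ∧ w t' = y}.ncard = lfvFreq w y t := by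
  classical
  unfold lfvFreq
  rw [← Set.ncard_coe_finset]
  congr 1
  ext s
  simp [Nat.lt_succ_iff]

theorem lfvFreq_mono {V : Type*} (w : ℕ → V) (y : V) {s t : ℕ} (h : s ≤ t) :
    lfvFreq w y s ≤ lfvFreq w y t := by
  classical
  unfold lfvFreq
  apply Finset.card_le_card
  intro r
  simp only [Finset.mem_filter, Finset.mem_range]
  rintro ⟨h1, h2⟩
  exact ⟨by omega, h2⟩

theorem lfvFreq_lt {V : Type*} (w : ℕ → V) (y : V) {s t : ℕ} (h : s < t) (hy : w (s + 1) = y) :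
    lfvFreq w y s < lfvFreq w y t := by
  classical
  refine lt_of_lt_of_le ?_ (lfvFreq_mono w y (Nat.succ_le_of_lt h))
  unfold lfvFreq
  rw [Finset.range_add_one (n := s.succ), Finset.filter_insert, if_pos hy,
    Finset.card_insert_of_notMem (by simp)]
  exact Nat.lt_succ_self _

theorem lfvFreq_step {V : Type*} [Fintype V] (G : SimpleGraph V) (δ : ℕ)
    (hδ : ∀ v : V, {u : V | G.Adj v u}.ncard ≤ δ) (w : ℕ → V)
    (hwalk : ∀ t : ℕ, G.Adj (w t) (w (t + 1)))
    (hpol : ∀ t : ℕ, ∀ u : V, G.Adj (w t) u → lfvFreq w (w (t + 1)) t ≤ lfvFreq w u t)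
    (T : ℕ) (u x : V) (hux : G.Adj u x) :
    lfvFreq w u T ≤ δ * (lfvFreq w x T + 1) := by
  classical
  have hfin : {y : V | G.Adj u y}.Finite := Set.toFinite _
  have hc : (hfin.toFinset ×ˢ Finset.range (lfvFreq w x T + 1)).card
      ≤ δ * (lfvFreq w x T + 1) := by
    rw [Finset.card_product, Finset.card_range, ← Set.ncard_eq_toFinset_card _ hfin]
    exact Nat.mul_le_mul_right _ (hδ u)
  refine le_trans ?_ hc
  conv_lhs => unfold lfvFreq
  apply Finset.card_le_card_of_injOn (fun s => (w (s + 1), lfvFreq w (w (s + 1)) s))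
  · intro s hs
    simp only [Finset.coe_filter, Finset.mem_range, Set.mem_setOf_eq] at hs
    obtain ⟨h1, rfl⟩ := hs
    have h2 := hpol s x hux
    have h3 := lfvFreq_mono w x (Nat.lt_succ_iff.mp h1)
    have h4 := hwalk s
    simp only [Finset.coe_product, Set.mem_prod, Finset.mem_coe, Set.Finite.mem_toFinset,
      Set.mem_setOf_eq, Finset.mem_range]
    exact ⟨h4, by omega⟩
  · intro s _ s' _ h
    simp only [Prod.mk.injEq] at h
    obtain ⟨h1, h2⟩ := h
    rcases lt_trichotomy s s' with h3 | h3 | h3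
    · have := lfvFreq_lt w (w (s + 1)) h3 rfl
      rw [← h1] at h2
      omega
    · exact h3
    · have := lfvFreq_lt w (w (s' + 1)) h3 rfl
      rw [h1] at h2
      omega

/-- If `G` is a finite connected simple graph on `n` vertices with maximum degree `δ` and
diameter `d`, then every walk on `G` following the LFV-v policy covers `G` within
`n * (δ + 1) ^ d` steps. -/
theorem lfv_v_cover_time_upper_bound {V : Type*} [Fintype V] (G : SimpleGraph V)
    (hconn : G.Connected)
    (n : ℕ) (hn : n = Fintype.card V)
    -- `δ` is the maximum degree of `G`
    (δ : ℕ) (hδ : IsGreatest {k : ℕ | ∃ v : V, {u : V | G.Adj v u}.ncard = k} δ)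
    -- `d` is the diameter of `G`
    (d : ℕ) (hd : IsGreatest {k : ℕ | ∃ u v : V, G.dist u v = k} d)
    (w : ℕ → V)
    -- `w` is a walk on `G`
    (hwalk : ∀ t : ℕ, G.Adj (w t) (w (t + 1)))
    -- `w` follows the LFV-v policy
    (hpol : ∀ t : ℕ, ∀ u : V, G.Adj (w t) u →
      {t' : ℕ | t' ≤ t ∧ w t' = w (t + 1)}.ncard ≤ {t' : ℕ | t' ≤ t ∧ w t' = u}.ncard) :
    ∀ v : V, ∃ t : ℕ, t ≤ n * (δ + 1) ^ d ∧ w t = v := by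
  classical
  intro v
  by_contra! hcon
  simp only [lfvFreq_eq] at hpol
  have hδ' : ∀ v : V, {u : V | G.Adj v u}.ncard ≤ δ := fun v => hδ.2 ⟨v, rfl⟩
  set T := n * (δ + 1) ^ d with hT
  have h0 : lfvFreq w v T = 0 := by
    unfold lfvFreq
    rw [Finset.card_eq_zero, Finset.filter_eq_empty_iff]
    intro s hs
    exact hcon s (Nat.lt_succ_iff.mp (Finset.mem_range.mp hs))
  have key : ∀ (u z : V) (p : G.Walk u z), lfvFreq w z T = 0 →
      lfvFreq w u T + 1 ≤ (δ + 1) ^ p.length := by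
    intro u z p hz
    induction p with
    | nil => simp [hz]
    | cons h p ih =>
      have h1 := lfvFreq_step G δ hδ' w hwalk hpol T _ _ h
      have h2 := ih hz
      rw [SimpleGraph.Walk.length_cons, pow_succ]
      nlinarith
  have hle : ∀ u : V, lfvFreq w u T ≤ (δ + 1) ^ d := by
    intro u
    obtain ⟨p, hp⟩ := hconn.exists_walk_length_eq_dist u v
    have h1 := key u v p h0
    have h2 : p.length ≤ d := hp ▸ hd.2 ⟨u, v, rfl⟩
    have h3 : (δ + 1) ^ p.length ≤ (δ + 1) ^ d := Nat.pow_le_pow_right (by omega) h2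
    omega
  have hsum : T + 1 = ∑ u : V, lfvFreq w u T := by
    have h := Finset.card_eq_sum_card_fiberwise (f := w) (s := Finset.range (T + 1))
      (t := (Finset.univ : Finset V)) (fun x _ => Finset.mem_coe.mpr (Finset.mem_univ _))
    rw [Finset.card_range] at h
    rw [h]
    apply Finset.sum_congr rfl
    intro u _
    unfold lfvFreq
    congr
  have hbound : ∑ u : V, lfvFreq w u T ≤ n * (δ + 1) ^ d := by
    have := Finset.sum_le_card_nsmul Finset.univ (fun u => lfvFreq w u T) _ (fun u _ => hle u)
    rwa [Finset.card_univ, ← hn, smul_eq_mul] at this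
  omega
end

section
/- There exists a constant c > 0 such that for infinitely many natural numbers n there exist a finite connected simple graph G on n vertices with maximum degree at most 3 and a walk w on G following the LFV-v policy whose cover time is at least c·n². (In particular, the least-frequently-visited-vertex strategy can take time quadratic in n to explore a graph of maximum degree 3, such as the dual graph of a triangulation of a polygonal region.) -/
/-- The base adjacency on `ℕ`, truncated to the vertices `< n`. -/
def LAdj (n a b : ℕ) : Prop :=
  a < n ∧ b < n ∧
    ((a % 5 ≠ 4 ∧ b = a + 1) ∨ ((a % 5 = 3 ∨ a % 5 = 4) ∧ b = a + 2) ∨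
     (b % 5 ≠ 4 ∧ a = b + 1) ∨ ((b % 5 = 3 ∨ b % 5 = 4) ∧ a = b + 2))

/-- Increase the count of `u` by one. -/
def bump (c : ℕ → ℕ) (u : ℕ) : ℕ → ℕ := fun v => c v + if v = u then 1 else 0

/-- A policy-respecting run of `k` steps. -/
inductive LRun (n : ℕ) : ℕ → (ℕ → ℕ) → ℕ → (ℕ → ℕ) → ℕ → Prop
  | nil (c v c') (h : ∀ y, c y = c' y) : LRun n 0 c v c' v
  | cons (k c v u c' v') (h1 : LAdj n v u) (h2 : ∀ y, LAdj n v y → c u ≤ c y)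
      (h3 : LRun n k (bump c u) u c' v') : LRun n (k + 1) c v c' v'

theorem LRun.trans {n k l : ℕ} {c c' c'' : ℕ → ℕ} {v v' v'' : ℕ}
    (h : LRun n k c v c' v') (h' : LRun n l c' v' c'' v'') : LRun n (k + l) c v c'' v'' := by
  induction h with
  | nil c v c' h =>
    have : c = c' := funext h
    subst this
    simpa using h'
  | cons k c v u c' v' h1 h2 h3 ih =>
    have := LRun.cons (k + l) c v u c'' v'' h1 h2 (ih h')
    have e : k + 1 + l = k + l + 1 := by omega
    rw [e]; exact this

/-- Counts in round `m`, outbound, having just arrived at `x_i = 5 i + 2`. -/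
def cOut (m i v : ℕ) : ℕ :=
  if v = 0 then 2 * m else if v = 1 then 3 * m
  else if v % 5 = 2 then 2 * (m - v / 5) + (if v / 5 ≤ i then 1 else 0)
  else if v % 5 = 3 then 3 * (m - v / 5) - 1 + (if v / 5 < i then 1 else 0)
  else if v % 5 = 4 then 2 * (m - v / 5) - 1 + (if v / 5 < i then 1 else 0)
  else if v % 5 = 0 then 2 * (m - (v / 5 - 1)) - 1
  else 3 * (m - (v / 5 - 1)) - 2 + (if v / 5 - 1 < i then 1 else 0)

/-- Counts in round `m`, inbound, having just arrived at `x_i = 5 i + 2`. -/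
def cIn (m i v : ℕ) : ℕ :=
  if v = 0 then 2 * m else if v = 1 then 3 * m
  else if v % 5 = 2 then (if v / 5 < i then 2 * (m - v / 5) + 1 else 2 * (m + 1 - v / 5))
  else if v % 5 = 3 then
    (if v / 5 < i then 3 * (m - v / 5) - 1 + 1 else 3 * (m + 1 - v / 5) - 1)
  else if v % 5 = 4 then
    (if v / 5 < i then 2 * (m - v / 5) - 1 + 1 else 2 * (m + 1 - v / 5) - 1)
  else if v % 5 = 0 then
    (if v / 5 - 1 < i then 2 * (m - (v / 5 - 1)) - 1 else 2 * (m + 1 - (v / 5 - 1)) - 1)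
  else (if v / 5 - 1 < i then 3 * (m - (v / 5 - 1)) - 2 + 1 else 3 * (m + 1 - (v / 5 - 1)) - 2)

section vals
variable (m i j : ℕ)
theorem cOut_l : cOut m i 0 = 2 * m := by simp [cOut]
theorem cOut_b : cOut m i 1 = 3 * m := by simp [cOut]
theorem cOut_x : cOut m i (5 * j + 2) = 2 * (m - j) + (if j ≤ i then 1 else 0) := by
  have h : (5 * j + 2) / 5 = j := by omega
  have h' : (5 * j + 2) % 5 = 2 := by omega
  simp [cOut, h, h']
theorem cOut_p : cOut m i (5 * j + 3) = 3 * (m - j) - 1 + (if j < i then 1 else 0) := by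
  have h : (5 * j + 3) / 5 = j := by omega
  have h' : (5 * j + 3) % 5 = 3 := by omega
  simp [cOut, h, h']
theorem cOut_s : cOut m i (5 * j + 4) = 2 * (m - j) - 1 + (if j < i then 1 else 0) := by
  have h : (5 * j + 4) / 5 = j := by omega
  have h' : (5 * j + 4) % 5 = 4 := by omega
  simp [cOut, h, h']
theorem cOut_t : cOut m i (5 * j + 5) = 2 * (m - j) - 1 := by
  have h : (5 * j + 5) / 5 = j + 1 := by omega
  have h' : (5 * j + 5) % 5 = 0 := by omega
  simp [cOut, h]
theorem cOut_q : cOut m i (5 * j + 6) = 3 * (m - j) - 2 + (if j < i then 1 else 0) := by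
  have h : (5 * j + 6) / 5 = j + 1 := by omega
  have h' : (5 * j + 6) % 5 = 1 := by omega
  simp [cOut, h, h']
theorem cOut_z : cOut m i (5 * j + 7) = 2 * (m - (j + 1)) + (if j + 1 ≤ i then 1 else 0) :=
  cOut_x m i (j + 1)
theorem cIn_l : cIn m i 0 = 2 * m := by simp [cIn]
theorem cIn_b : cIn m i 1 = 3 * m := by simp [cIn]
theorem cIn_x : cIn m i (5 * j + 2) =
    if j < i then 2 * (m - j) + 1 else 2 * (m + 1 - j) := by
  have h : (5 * j + 2) / 5 = j := by omega
  have h' : (5 * j + 2) % 5 = 2 := by omega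
  simp [cIn, h, h']
theorem cIn_p : cIn m i (5 * j + 3) =
    if j < i then 3 * (m - j) - 1 + 1 else 3 * (m + 1 - j) - 1 := by
  have h : (5 * j + 3) / 5 = j := by omega
  have h' : (5 * j + 3) % 5 = 3 := by omega
  simp [cIn, h, h']
theorem cIn_s : cIn m i (5 * j + 4) =
    if j < i then 2 * (m - j) - 1 + 1 else 2 * (m + 1 - j) - 1 := by
  have h : (5 * j + 4) / 5 = j := by omega
  have h' : (5 * j + 4) % 5 = 4 := by omega
  simp [cIn, h, h']
theorem cIn_t : cIn m i (5 * j + 5) =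
    if j < i then 2 * (m - j) - 1 else 2 * (m + 1 - j) - 1 := by
  have h : (5 * j + 5) / 5 = j + 1 := by omega
  have h' : (5 * j + 5) % 5 = 0 := by omega
  simp [cIn, h, h']
theorem cIn_q : cIn m i (5 * j + 6) =
    if j < i then 3 * (m - j) - 2 + 1 else 3 * (m + 1 - j) - 2 := by
  have h : (5 * j + 6) / 5 = j + 1 := by omega
  have h' : (5 * j + 6) % 5 = 1 := by omega
  simp [cIn, h, h']
theorem cIn_z : cIn m i (5 * j + 7) =
    if j + 1 < i then 2 * (m - (j + 1)) + 1 else 2 * (m + 1 - (j + 1)) := cIn_x m i (j + 1)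
end vals

theorem vcases (y : ℕ) : y = 0 ∨ y = 1 ∨ ∃ j, y = 5 * j + 2 ∨ y = 5 * j + 3 ∨ y = 5 * j + 4 ∨
    y = 5 * j + 5 ∨ y = 5 * j + 6 := by
  by_cases h0 : y = 0
  · exact Or.inl h0
  by_cases h1 : y = 1
  · exact Or.inr (Or.inl h1)
  exact Or.inr (Or.inr ⟨(y - 2) / 5, by omega⟩)

section steps
variable {n i k v' : ℕ} {c c' : ℕ → ℕ}

theorem run_x (u : ℕ) (hn : 5 * i + 2 < n) (hu : u < n) (h : u = 5 * i + 1 ∨ u = 5 * i + 3)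
    (h1 : c u ≤ c (5 * i + 1)) (h3 : c u ≤ c (5 * i + 3))
    (r : LRun n k (bump c u) u c' v') : LRun n (k + 1) c (5 * i + 2) c' v' := by
  refine .cons _ _ _ u _ _ ⟨hn, hu, by omega⟩ ?_ r
  rintro y ⟨-, -, hy⟩
  have : y = 5 * i + 1 ∨ y = 5 * i + 3 := by omega
  rcases this with rfl | rfl <;> assumption

theorem run_p (u : ℕ) (hn : 5 * i + 3 < n) (hu : u < n)
    (h : u = 5 * i + 2 ∨ u = 5 * i + 4 ∨ u = 5 * i + 5)
    (h1 : c u ≤ c (5 * i + 2)) (h2 : c u ≤ c (5 * i + 4)) (h3 : c u ≤ c (5 * i + 5))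
    (r : LRun n k (bump c u) u c' v') : LRun n (k + 1) c (5 * i + 3) c' v' := by
  refine .cons _ _ _ u _ _ ⟨hn, hu, by omega⟩ ?_ r
  rintro y ⟨-, -, hy⟩
  have : y = 5 * i + 2 ∨ y = 5 * i + 4 ∨ y = 5 * i + 5 := by omega
  rcases this with rfl | rfl | rfl <;> assumption

theorem run_s (u : ℕ) (hn : 5 * i + 4 < n) (hu : u < n) (h : u = 5 * i + 3 ∨ u = 5 * i + 6)
    (h1 : c u ≤ c (5 * i + 3)) (h3 : c u ≤ c (5 * i + 6))
    (r : LRun n k (bump c u) u c' v') : LRun n (k + 1) c (5 * i + 4) c' v' := by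
  refine .cons _ _ _ u _ _ ⟨hn, hu, by omega⟩ ?_ r
  rintro y ⟨-, -, hy⟩
  have : y = 5 * i + 3 ∨ y = 5 * i + 6 := by omega
  rcases this with rfl | rfl <;> assumption

theorem run_t (u : ℕ) (hn : 5 * i + 5 < n) (hu : u < n) (h : u = 5 * i + 3 ∨ u = 5 * i + 6)
    (h1 : c u ≤ c (5 * i + 3)) (h3 : c u ≤ c (5 * i + 6))
    (r : LRun n k (bump c u) u c' v') : LRun n (k + 1) c (5 * i + 5) c' v' := by
  refine .cons _ _ _ u _ _ ⟨hn, hu, by omega⟩ ?_ r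
  rintro y ⟨-, -, hy⟩
  have : y = 5 * i + 3 ∨ y = 5 * i + 6 := by omega
  rcases this with rfl | rfl <;> assumption

theorem run_q (u : ℕ) (hn : 5 * i + 6 < n) (hu : u < n)
    (h : u = 5 * i + 4 ∨ u = 5 * i + 5 ∨ u = 5 * i + 7)
    (h1 : c u ≤ c (5 * i + 4)) (h2 : c u ≤ c (5 * i + 5)) (h3 : c u ≤ c (5 * i + 7))
    (r : LRun n k (bump c u) u c' v') : LRun n (k + 1) c (5 * i + 6) c' v' := by
  refine .cons _ _ _ u _ _ ⟨hn, hu, by omega⟩ ?_ r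
  rintro y ⟨-, -, hy⟩
  have : y = 5 * i + 4 ∨ y = 5 * i + 5 ∨ y = 5 * i + 7 := by omega
  rcases this with rfl | rfl | rfl <;> assumption

theorem run_b (u : ℕ) (hn : 1 < n) (hu : u < n) (h : u = 0 ∨ u = 2)
    (h1 : c u ≤ c 0) (h3 : c u ≤ c 2)
    (r : LRun n k (bump c u) u c' v') : LRun n (k + 1) c 1 c' v' := by
  refine .cons _ _ _ u _ _ ⟨hn, hu, by omega⟩ ?_ r
  rintro y ⟨-, -, hy⟩
  have : y = 0 ∨ y = 2 := by omega
  rcases this with rfl | rfl <;> assumption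

theorem run_l (u : ℕ) (hn : 0 < n) (hu : u < n) (h : u = 1)
    (r : LRun n k (bump c u) u c' v') : LRun n (k + 1) c 0 c' v' := by
  refine .cons _ _ _ u _ _ ⟨hn, hu, by omega⟩ ?_ r
  rintro y ⟨-, -, hy⟩
  have : y = u := by omega
  rw [this]
end steps

/-- value of the count at `q_{i-1}` (or at the base vertex `1` for `i = 0`), outbound -/
theorem cOut_q' (m i : ℕ) (h : i ≤ m) : 3 * (m - i) ≤ cOut m i (5 * i + 1) := by
  rcases i with _ | i
  · simp [cOut_b]
  · have := cOut_q m (i + 1) i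
    have e : 5 * (i + 1) + 1 = 5 * i + 6 := by omega
    rw [e, this, if_pos (by omega)]; omega

theorem cIn_q' (m i : ℕ) (h : i ≤ m) : cIn m i (5 * i + 1) ≤ 3 * (m - i) + 2 := by
  rcases i with _ | i
  · simp [cIn_b]
  · have := cIn_q m (i + 1) i
    have e : 5 * (i + 1) + 1 = 5 * i + 6 := by omega
    rw [e, this, if_pos (by omega)]; omega

set_option linter.unusedSimpArgs false

theorem pass_out (n m i : ℕ) (hi : i < m) (hn : 5 * i + 7 < n) :
    LRun n 4 (cOut m i) (5 * i + 2) (cOut m (i + 1)) (5 * i + 7) := by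
  have hq := cOut_q' m i hi.le
  obtain ⟨a, rfl⟩ : ∃ a, m = i + 1 + a := ⟨m - i - 1, by omega⟩
  refine run_x (5 * i + 3) (by omega) (by omega) (by omega) ?_ ?_ ?_
  · rw [cOut_p, if_neg (by omega)]; omega
  · exact le_rfl
  refine run_p (5 * i + 4) (by omega) (by omega) (by omega) ?_ ?_ ?_ ?_
  iterate 3 (simp [bump, cOut_x, cOut_p, cOut_s, cOut_t, cOut_q, cOut_z] <;> omega)
  refine run_s (5 * i + 6) (by omega) (by omega) (by omega) ?_ ?_ ?_
  iterate 2 (simp [bump, cOut_x, cOut_p, cOut_s, cOut_t, cOut_q, cOut_z] <;> omega)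
  refine run_q (5 * i + 7) (by omega) (by omega) (by omega) ?_ ?_ ?_ ?_
  iterate 3 (simp [bump, cOut_x, cOut_p, cOut_s, cOut_t, cOut_q, cOut_z] <;> omega)
  refine .nil _ _ _ ?_
  intro y
  rcases vcases y with rfl | rfl | ⟨j, rfl | rfl | rfl | rfl | rfl⟩ <;>
    simp only [bump, cOut_l, cOut_b, cOut_x, cOut_p, cOut_s, cOut_t, cOut_q] <;>
    split_ifs <;> first | contradiction | omega

theorem frontier_run (n m : ℕ) (hn : 5 * m + 7 < n) :
    LRun n 6 (cOut m m) (5 * m + 2) (cIn m m) (5 * m + 2) := by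
  refine run_x (5 * m + 3) (by omega) (by omega) (by omega) ?_ ?_ ?_
  · rw [cOut_p, if_neg (by omega)]; omega
  · exact le_rfl
  refine run_p (5 * m + 4) (by omega) (by omega) (by omega) ?_ ?_ ?_ ?_
  iterate 3 (simp [bump, cOut_x, cOut_p, cOut_s, cOut_t, cOut_q, cOut_z] <;> done)
  refine run_s (5 * m + 6) (by omega) (by omega) (by omega) ?_ ?_ ?_
  iterate 2 (simp [bump, cOut_x, cOut_p, cOut_s, cOut_t, cOut_q, cOut_z] <;> done)
  refine run_q (5 * m + 5) (by omega) (by omega) (by omega) ?_ ?_ ?_ ?_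
  iterate 3 (simp [bump, cOut_x, cOut_p, cOut_s, cOut_t, cOut_q, cOut_z] <;> done)
  refine run_t (5 * m + 3) (by omega) (by omega) (by omega) ?_ ?_ ?_
  iterate 2 (simp [bump, cOut_x, cOut_p, cOut_s, cOut_t, cOut_q, cOut_z] <;> done)
  refine run_p (5 * m + 2) (by omega) (by omega) (by omega) ?_ ?_ ?_ ?_
  iterate 3 (simp [bump, cOut_x, cOut_p, cOut_s, cOut_t, cOut_q, cOut_z] <;> done)
  refine .nil _ _ _ ?_
  intro y
  rcases vcases y with rfl | rfl | ⟨j, rfl | rfl | rfl | rfl | rfl⟩ <;>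
    simp only [bump, cOut_l, cOut_b, cOut_x, cOut_p, cOut_s, cOut_t, cOut_q,
      cIn_l, cIn_b, cIn_x, cIn_p, cIn_s, cIn_t, cIn_q] <;>
    split_ifs <;> first | contradiction | omega

set_option maxHeartbeats 4000000 in
theorem pass_in (n m i : ℕ) (hi : i < m) (hn : 5 * i + 7 < n) :
    LRun n 8 (cIn m (i + 1)) (5 * i + 7) (cIn m i) (5 * i + 2) := by
  have hq := cIn_q' m (i + 1) hi
  have hz := cIn_p m (i + 1) (i + 1)
  rw [if_neg (by omega)] at hz
  have hq2 := cIn_q m (i + 1) i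
  rw [if_pos (by omega)] at hq2
  obtain ⟨a, rfl⟩ : ∃ a, m = i + 1 + a := ⟨m - i - 1, by omega⟩
  have e1 : i + 1 + a - i = a + 1 := by omega
  have e2 : i + 1 + a - (i + 1) = a := by omega
  have e3 : i + 1 + a + 1 - (i + 1) = a + 1 := by omega
  refine run_x (i := i + 1) (5 * i + 6) (by omega) (by omega) (by omega) le_rfl ?_ ?_
  · rw [hz, hq2]; omega
  refine run_q (5 * i + 5) (by omega) (by omega) (by omega) ?_ ?_ ?_ ?_
  iterate 3 (simp [bump, cIn_x, cIn_p, cIn_s, cIn_t, cIn_q, cIn_z, e1, e2, e3] <;> omega)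
  refine run_t (5 * i + 3) (by omega) (by omega) (by omega) ?_ ?_ ?_
  iterate 2 (simp [bump, cIn_x, cIn_p, cIn_s, cIn_t, cIn_q, cIn_z, e1, e2, e3] <;> omega)
  refine run_p (5 * i + 4) (by omega) (by omega) (by omega) ?_ ?_ ?_ ?_
  iterate 3 (simp [bump, cIn_x, cIn_p, cIn_s, cIn_t, cIn_q, cIn_z, e1, e2, e3] <;> omega)
  refine run_s (5 * i + 6) (by omega) (by omega) (by omega) ?_ ?_ ?_
  iterate 2 (simp [bump, cIn_x, cIn_p, cIn_s, cIn_t, cIn_q, cIn_z, e1, e2, e3] <;> omega)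
  refine run_q (5 * i + 5) (by omega) (by omega) (by omega) ?_ ?_ ?_ ?_
  iterate 3 (simp [bump, cIn_x, cIn_p, cIn_s, cIn_t, cIn_q, cIn_z, e1, e2, e3] <;> omega)
  refine run_t (5 * i + 3) (by omega) (by omega) (by omega) ?_ ?_ ?_
  iterate 2 (simp [bump, cIn_x, cIn_p, cIn_s, cIn_t, cIn_q, cIn_z, e1, e2, e3] <;> omega)
  refine run_p (5 * i + 2) (by omega) (by omega) (by omega) ?_ ?_ ?_ ?_
  iterate 3 (simp [bump, cIn_x, cIn_p, cIn_s, cIn_t, cIn_q, cIn_z, e1, e2, e3] <;> omega)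
  refine .nil _ _ _ ?_
  intro y
  rcases vcases y with rfl | rfl | ⟨j, rfl | rfl | rfl | rfl | rfl⟩ <;>
    simp only [bump, cIn_l, cIn_b, cIn_x, cIn_p, cIn_s, cIn_t, cIn_q] <;>
    split_ifs <;> first | contradiction | omega

theorem base_run (n m : ℕ) (hn : 7 < n) :
    LRun n 6 (cIn m 0) 2 (cOut (m + 1) 0) 2 := by
  have x0 := cIn_x m 0 0
  have p0 := cIn_p m 0 0
  have b0 := cIn_b m 0
  have l0 := cIn_l m 0
  simp only [lt_irrefl, if_false, Nat.mul_zero, Nat.zero_add, Nat.sub_zero] at x0 p0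
  refine run_x (i := 0) 1 (by omega) (by omega) (by omega) le_rfl ?_ ?_
  · simp only [Nat.mul_zero, Nat.zero_add]; omega
  refine run_b 0 (by omega) (by omega) (by omega) le_rfl ?_ ?_
  · simp [bump, x0, b0, l0] <;> omega
  refine run_l 1 (by omega) (by omega) (by omega) ?_
  refine run_b 0 (by omega) (by omega) (by omega) le_rfl ?_ ?_
  · simp [bump, x0, b0, l0] <;> omega
  refine run_l 1 (by omega) (by omega) (by omega) ?_
  refine run_b 2 (by omega) (by omega) (by omega) ?_ le_rfl ?_
  · simp [bump, x0, b0, l0] <;> omega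
  refine .nil _ _ _ ?_
  intro y
  rcases vcases y with rfl | rfl | ⟨j, rfl | rfl | rfl | rfl | rfl⟩ <;>
    simp only [bump, cOut_l, cOut_b, cOut_x, cOut_p, cOut_s, cOut_t, cOut_q,
      cIn_l, cIn_b, cIn_x, cIn_p, cIn_s, cIn_t, cIn_q] <;>
    split_ifs <;> first | contradiction | omega

theorem out_run (n m : ℕ) (i : ℕ) (hi : i ≤ m) (hn : 5 * m + 7 < n) :
    LRun n (4 * i) (cOut m 0) 2 (cOut m i) (5 * i + 2) := by
  induction i with
  | zero => exact .nil _ _ _ (fun _ => rfl)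
  | succ i ih => exact (ih (by omega)).trans (pass_out n m i (by omega) (by omega))

theorem in_run (n m : ℕ) (i : ℕ) (hi : i ≤ m) (hn : 5 * m + 7 < n) :
    LRun n (8 * i) (cIn m i) (5 * i + 2) (cIn m 0) 2 := by
  induction i with
  | zero => exact .nil _ _ _ (fun _ => rfl)
  | succ i ih =>
    have := (pass_in n m i (by omega) (by omega)).trans (ih (by omega))
    have e : 8 * (i + 1) = 8 + 8 * i := by omega
    rw [e]; exact this

theorem round_run (n m : ℕ) (hn : 5 * m + 7 < n) :
    LRun n (12 * (m + 1)) (cOut m 0) 2 (cOut (m + 1) 0) 2 := by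
  have := (((out_run n m m le_rfl hn).trans (frontier_run n m hn)).trans
    (in_run n m m le_rfl hn)).trans (base_run n m (by omega))
  have e : 12 * (m + 1) = 4 * m + 6 + 8 * m + 6 := by omega
  rw [e]; exact this

theorem full_run (K m : ℕ) (hm : m ≤ K) :
    LRun (5 * K + 3) (6 * m * (m + 1)) (cOut 0 0) 2 (cOut m 0) 2 := by
  induction m with
  | zero => exact .nil _ _ _ (fun _ => rfl)
  | succ m ih =>
    have := (ih (by omega)).trans (round_run (5 * K + 3) m (by omega))
    have e : 6 * (m + 1) * (m + 1 + 1) = 6 * m * (m + 1) + 12 * (m + 1) := by ring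
    rw [e]; exact this

/-- One policy step on states (counts, position). -/
def LStep (n : ℕ) (a b : (ℕ → ℕ) × ℕ) : Prop :=
  LAdj n a.2 b.2 ∧ (∀ y, LAdj n a.2 y → a.1 b.2 ≤ a.1 y) ∧ b.1 = bump a.1 b.2

theorem exists_down (n v : ℕ) (hv : v < n) (h0 : v ≠ 0) : ∃ u, u < v ∧ LAdj n v u := by
  by_cases h : v % 5 = 0
  · exact ⟨v - 2, by omega, hv, by omega, by omega⟩
  · exact ⟨v - 1, by omega, hv, by omega, by omega⟩

theorem exists_step (n : ℕ) (hn : 1 < n) (a : (ℕ → ℕ) × ℕ) (ha : a.2 < n) :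
    ∃ b, LStep n a b := by
  have hne : {u | LAdj n a.2 u}.Nonempty := by
    by_cases h : a.2 = 0
    · exact ⟨1, ha, hn, by omega⟩
    · obtain ⟨u, -, hu⟩ := exists_down n a.2 ha h
      exact ⟨u, hu⟩
  refine ⟨(bump a.1 (Function.argminOn a.1 _ hne), Function.argminOn a.1 _ hne), ?_, ?_, rfl⟩
  · exact Function.argminOn_mem a.1 _ hne
  · intro y hy
    exact Function.argminOn_le a.1 _ hy

theorem extend_run {n k : ℕ} (hn : 1 < n) {c c' : ℕ → ℕ} {v v' : ℕ}
    (h : LRun n k c v c' v') : v < n → ∃ s : ℕ → (ℕ → ℕ) × ℕ, s 0 = (c, v) ∧ s k = (c', v') ∧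
      ∀ t, LStep n (s t) (s (t + 1)) := by
  induction h with
  | nil c v c' h =>
    intro hv
    have : c = c' := funext h
    subst this
    choose f hf using fun a : {a : (ℕ → ℕ) × ℕ // a.2 < n} => exists_step n hn a.1 a.2
    let g : {a : (ℕ → ℕ) × ℕ // a.2 < n} → {a : (ℕ → ℕ) × ℕ // a.2 < n} :=
      fun a => ⟨f a, (hf a).1.2.1⟩
    refine ⟨fun t => (g^[t] ⟨(c, v), hv⟩).1, rfl, rfl, fun t => ?_⟩
    simp only [Function.iterate_succ_apply']
    exact hf _
  | cons k c v u c' v' h1 h2 h3 ih =>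
    intro hv
    obtain ⟨s, hs0, hsk, hs⟩ := ih h1.2.1
    refine ⟨fun t => Nat.casesOn t (c, v) s, rfl, hsk, ?_⟩
    intro t
    cases t with
    | zero =>
      show LStep n (c, v) (s 0)
      rw [hs0]; exact ⟨h1, h2, rfl⟩
    | succ t => exact hs t

theorem count_eq {n : ℕ} (s : ℕ → (ℕ → ℕ) × ℕ)
    (h0 : ∀ y, (s 0).1 y = if y = (s 0).2 then 1 else 0)
    (hs : ∀ t, LStep n (s t) (s (t + 1))) (t y : ℕ) :
    {t' : ℕ | t' ≤ t ∧ (s t').2 = y}.ncard = (s t).1 y := by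
  induction t with
  | zero =>
    rw [h0]
    by_cases h : y = (s 0).2
    · have : {t' : ℕ | t' ≤ 0 ∧ (s t').2 = y} = {0} := by
        ext t'; simp only [Set.mem_ofPred_eq, Set.mem_singleton_iff]
        constructor
        · rintro ⟨h, -⟩; omega
        · rintro rfl; exact ⟨le_rfl, h.symm⟩
      rw [this, if_pos h, Set.ncard_singleton]
    · have : {t' : ℕ | t' ≤ 0 ∧ (s t').2 = y} = ∅ := by
        ext t'; simp only [Set.mem_ofPred_eq, Set.mem_empty_iff_false, iff_false]
        rintro ⟨h', h2⟩
        obtain rfl : t' = 0 := by omega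
        exact h h2.symm
      rw [this, if_neg h, Set.ncard_empty]
  | succ t ih =>
    rw [(hs t).2.2]
    unfold bump
    rw [← ih]
    by_cases h : y = (s (t + 1)).2
    · have : {t' : ℕ | t' ≤ t + 1 ∧ (s t').2 = y} =
          insert (t + 1) {t' : ℕ | t' ≤ t ∧ (s t').2 = y} := by
        ext t'; simp only [Set.mem_ofPred_eq, Set.mem_insert_iff]
        constructor
        · rintro ⟨h1, h2⟩
          by_cases h3 : t' = t + 1
          · exact Or.inl h3
          · exact Or.inr ⟨by omega, h2⟩
        · rintro (rfl | ⟨h1, h2⟩)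
          · exact ⟨le_rfl, h.symm⟩
          · exact ⟨by omega, h2⟩
      rw [this, if_pos h, Set.ncard_insert_of_notMem (by simp)
        ((Set.finite_Iic t).subset (fun x hx => hx.1))]
    · have : {t' : ℕ | t' ≤ t + 1 ∧ (s t').2 = y} = {t' : ℕ | t' ≤ t ∧ (s t').2 = y} := by
        ext t'; simp only [Set.mem_ofPred_eq]
        constructor
        · rintro ⟨h1, h2⟩
          refine ⟨?_, h2⟩
          by_contra h3
          obtain rfl : t' = t + 1 := by omega
          exact h h2.symm
        · rintro ⟨h1, h2⟩
          exact ⟨by omega, h2⟩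
      rw [this, if_neg h, Nat.add_zero]

/-- The graph of the construction. -/
def LGraph (n : ℕ) : SimpleGraph (Fin n) where
  Adj a b := LAdj n a b
  symm := by
    constructor
    rintro a b ⟨h1, h2, h3⟩
    exact ⟨h2, h1, by omega⟩
  loopless := by
    constructor
    rintro a ⟨h1, h2, h3⟩
    omega

theorem LGraph_connected (n : ℕ) (hn : 0 < n) : (LGraph n).Connected := by
  have key : ∀ v (hv : v < n), (LGraph n).Reachable ⟨v, hv⟩ ⟨0, hn⟩ := by
    intro v
    induction v using Nat.strong_induction_on with
    | _ v ih =>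
      intro hv
      by_cases h : v = 0
      · subst h; exact .refl _
      · obtain ⟨u, hu, ha⟩ := exists_down n v hv h
        have : (LGraph n).Adj ⟨v, hv⟩ ⟨u, hu.trans hv⟩ := ha
        exact this.reachable.trans (ih u hu _)
  have : Nonempty (Fin n) := ⟨⟨0, hn⟩⟩
  exact ⟨fun a b => (key a.1 a.2).trans (key b.1 b.2).symm⟩

theorem LGraph_degree (n : ℕ) (v : Fin n) : {u : Fin n | (LGraph n).Adj v u}.ncard ≤ 3 := by
  have key : ∃ a b c : ℕ, ∀ y, LAdj n v y → y = a ∨ y = b ∨ y = c := by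
    have h : v.1 % 5 = 0 ∨ v.1 % 5 = 1 ∨ v.1 % 5 = 2 ∨ v.1 % 5 = 3 ∨ v.1 % 5 = 4 := by omega
    rcases h with h | h | h | h | h
    · exact ⟨v - 2, v + 1, v + 1, fun y hy => by obtain ⟨-, -, hy⟩ := hy; omega⟩
    · exact ⟨v - 2, v - 1, v + 1, fun y hy => by obtain ⟨-, -, hy⟩ := hy; omega⟩
    · exact ⟨v - 1, v + 1, v + 1, fun y hy => by obtain ⟨-, -, hy⟩ := hy; omega⟩
    · exact ⟨v - 1, v + 1, v + 2, fun y hy => by obtain ⟨-, -, hy⟩ := hy; omega⟩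
    · exact ⟨v - 1, v + 2, v + 2, fun y hy => by obtain ⟨-, -, hy⟩ := hy; omega⟩
  obtain ⟨a, b, c, h⟩ := key
  rw [← Set.ncard_image_of_injective _ Fin.val_injective]
  have hsub : (Fin.val '' {u : Fin n | (LGraph n).Adj v u}) ⊆ (({a, b, c} : Finset ℕ) : Set ℕ) := by
    rintro _ ⟨u, hu, rfl⟩
    simpa using h u hu
  calc _ ≤ (({a, b, c} : Finset ℕ) : Set ℕ).ncard :=
        Set.ncard_le_ncard hsub (Finset.finite_toSet _)
    _ ≤ 3 := by rw [Set.ncard_coe_finset]; exact Finset.card_le_three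


/-- There is a constant `c > 0` such that for infinitely many `n` there is a connected
simple graph on `n` vertices of maximum degree at most `3` and a walk following the
LFV-v (least-frequently-visited vertex) policy whose cover time is at least `c * n ^ 2`. -/
theorem lfv_v_quadratic_lower_bound :
    ∃ c : ℝ, 0 < c ∧
      ∀ N : ℕ, ∃ n : ℕ, N ≤ n ∧
        ∃ G : SimpleGraph (Fin n),
          G.Connected ∧
          (∀ v : Fin n, {u : Fin n | G.Adj v u}.ncard ≤ 3) ∧
          ∃ w : ℕ → Fin n,
            -- `w` is a walk on `G`
            (∀ t : ℕ, G.Adj (w t) (w (t + 1))) ∧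
            -- `w` follows the LFV-v policy
            (∀ t : ℕ, ∀ u : Fin n, G.Adj (w t) u →
              {t' : ℕ | t' ≤ t ∧ w t' = w (t + 1)}.ncard ≤
                {t' : ℕ | t' ≤ t ∧ w t' = u}.ncard) ∧
            -- the cover time of `w` is at least `c * n ^ 2`
            ∃ v : Fin n, ∀ t : ℕ, (t : ℝ) < c * (n : ℝ) ^ 2 → w t ≠ v := by
  refine ⟨1 / 16, by norm_num, fun N => ?_⟩
  obtain ⟨K, hK⟩ : ∃ K, K = N + 1 := ⟨_, rfl⟩
  refine ⟨5 * K + 3, by omega, LGraph _, LGraph_connected _ (by omega), LGraph_degree _, ?_⟩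
  obtain ⟨s, hs0, hsk, hs⟩ := extend_run (by omega) (full_run K K le_rfl) (by omega)
  have hc := count_eq s (by
    intro y
    rw [hs0]
    rcases vcases y with rfl | rfl | ⟨j, rfl | rfl | rfl | rfl | rfl⟩ <;>
      simp only [cOut_l, cOut_b, cOut_x, cOut_p, cOut_s, cOut_t, cOut_q] <;>
      split_ifs <;> first | contradiction | omega) hs
  have hlt : ∀ t, (s t).2 < 5 * K + 3 := fun t => (hs t).1.1
  refine ⟨fun t => ⟨(s t).2, hlt t⟩, fun t => (hs t).1, ?_, ⟨5 * K + 2, by omega⟩, ?_⟩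
  · intro t u hu
    have e : ∀ y : Fin (5 * K + 3),
        {t' : ℕ | t' ≤ t ∧ (⟨(s t').2, hlt t'⟩ : Fin (5 * K + 3)) = y}.ncard = (s t).1 y.1 := by
      intro y
      rw [← hc]
      simp only [Fin.ext_iff]
    rw [e, e]
    exact (hs t).2.1 u hu
  · intro t ht heq
    have h1 : (s t).2 = 5 * K + 2 := congrArg Fin.val heq
    have hle : t ≤ 6 * K * (K + 1) := by
      have hK1 : (1 : ℝ) ≤ K := by exact_mod_cast (show 1 ≤ K by omega)
      push_cast at ht
      have : (t : ℝ) ≤ 6 * K * (K + 1) := by nlinarith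
      exact_mod_cast this
    have h2 := hc (6 * K * (K + 1)) (5 * K + 2)
    rw [hsk] at h2
    simp only [cOut_x] at h2
    rw [if_neg (by omega)] at h2
    have h3 : {t' : ℕ | t' ≤ 6 * K * (K + 1) ∧ (s t').2 = 5 * K + 2}.ncard = 0 := by omega
    rw [Set.ncard_eq_zero ((Set.finite_Iic _).subset (fun x hx => hx.1))] at h3
    have : t ∈ (∅ : Set ℕ) := h3 ▸ ⟨hle, h1⟩
    exact this
end

section
/- There exists a constant c > 0 such that for infinitely many natural numbers n there exist a finite connected simple graph G on n vertices with maximum degree at most 3 and a walk w on G following the LFV-e policy whose cover time is at least c·n². (In particular, the least-frequently-visited-edge strategy can take time quadratic in n to explore a graph of maximum degree 3, such as the dual graph of a triangulation of a polygonal region.) -/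
/-- State `(k, j, q)` : phase, cell, local state; position of the robot. -/
def lfvPos (s : ℕ × ℕ × ℕ) : ℕ :=
  if s.2.2 = 0 then 3 * s.2.1
  else if s.2.2 = 2 ∨ s.2.2 = 5 then 3 * s.2.1 + 3
  else if s.2.2 = 3 ∨ s.2.2 = 6 then 3 * s.2.1 + 2
  else 3 * s.2.1 + 1

/-- Transition of the explicit walk on the chain of `K` triangles. -/
def lfvStep (K : ℕ) (s : ℕ × ℕ × ℕ) : ℕ × ℕ × ℕ :=
  if s.2.2 = 1 then
    if s.2.1 = K then (s.1, s.2.1 - 1, 2)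
    else if s.2.1 < s.1 then (s.1, s.2.1 + 1, 0)
    else (s.1, s.2.1, 5)
  else if s.2.2 = 7 then
    if s.2.1 = 0 then (s.1 + 1, 0, 0) else (s.1, s.2.1 - 1, 2)
  else (s.1, s.2.1, s.2.2 + 1)

/-- Traversal count of the edge `{a, b}`, `a < b`, in a given state. -/
def lfvCnt (s : ℕ × ℕ × ℕ) (a b : ℕ) : ℕ :=
  if a / 3 < s.2.1 then
    if a % 3 = 0 then 2 * (s.1 - a / 3) + 1
    else if b = a + 2 then 2 * (s.1 - a / 3) else 2 * (s.1 - a / 3) - 1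
  else if s.2.1 < a / 3 then
    if s.2.2 ≤ 1 then
      (if a % 3 = 0 then 2 * (s.1 - a / 3) else 2 * (s.1 - a / 3) - 1)
    else
      (if a % 3 = 0 then 2 * (s.1 + 1 - a / 3) else 2 * (s.1 + 1 - a / 3) - 1)
  else if a % 3 = 0 then
    (if s.2.2 = 0 then 2 * (s.1 - a / 3) else 2 * (s.1 - a / 3) + 1)
  else if b = a + 2 then
    (if s.2.2 ≤ 1 then 2 * (s.1 - a / 3) - 1
     else if s.2.2 ≤ 4 then 2 * (s.1 - a / 3) else 2 * (s.1 - a / 3) + 1)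
  else if a % 3 = 2 then
    (if s.2.2 ≤ 2 then 2 * (s.1 - a / 3) - 1
     else if s.2.2 ≤ 5 then 2 * (s.1 - a / 3) else 2 * (s.1 - a / 3) + 1)
  else
    (if s.2.2 ≤ 3 then 2 * (s.1 - a / 3) - 1
     else if s.2.2 ≤ 6 then 2 * (s.1 - a / 3) else 2 * (s.1 - a / 3) + 1)

/-- Oriented edges `a < b` of the chain. -/
def lfvE (K a b : ℕ) : Prop := (b = a + 1 ∨ (a % 3 = 1 ∧ b = a + 2)) ∧ b ≤ 3 * K + 1

/-- Validity of a state. -/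
def lfvOK (K : ℕ) (s : ℕ × ℕ × ℕ) : Prop :=
  s.2.1 ≤ s.1 ∧ s.2.1 ≤ K ∧ s.2.2 ≤ 7 ∧ (2 ≤ s.2.2 → s.2.1 < K) ∧
    (2 ≤ s.2.2 → s.2.2 ≤ 4 → s.2.1 < s.1)

lemma lfvOK_step {K : ℕ} (hK : 0 < K) {s : ℕ × ℕ × ℕ} (h : lfvOK K s) :
    lfvOK K (lfvStep K s) := by
  obtain ⟨k, j, q⟩ := s
  simp only [lfvOK, lfvStep] at *
  split_ifs <;> simp only <;> omega

lemma lfvPos_le {K : ℕ} {s : ℕ × ℕ × ℕ} (h : lfvOK K s) : lfvPos s ≤ 3 * K + 1 := by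
  obtain ⟨k, j, q⟩ := s
  simp only [lfvOK, lfvPos] at *
  split_ifs <;> omega

/-- All transitions, listed explicitly. -/
lemma lfv_trans {K k j q : ℕ} (h : lfvOK K (k, j, q)) :
    (q = 0 ∧ lfvPos (k, j, q) = 3 * j ∧ lfvStep K (k, j, q) = (k, j, 1)
      ∧ lfvPos (lfvStep K (k, j, q)) = 3 * j + 1) ∨
    (q = 1 ∧ lfvPos (k, j, q) = 3 * j + 1 ∧ lfvStep K (k, j, q) = (k, j - 1, 2)
      ∧ lfvPos (lfvStep K (k, j, q)) = 3 * (j - 1) + 3 ∧ j = K) ∨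
    (q = 1 ∧ lfvPos (k, j, q) = 3 * j + 1 ∧ lfvStep K (k, j, q) = (k, j + 1, 0)
      ∧ lfvPos (lfvStep K (k, j, q)) = 3 * j + 3 ∧ j < K ∧ j < k) ∨
    (q = 1 ∧ lfvPos (k, j, q) = 3 * j + 1 ∧ lfvStep K (k, j, q) = (k, j, 5)
      ∧ lfvPos (lfvStep K (k, j, q)) = 3 * j + 3 ∧ j < K ∧ j = k) ∨
    (q = 2 ∧ lfvPos (k, j, q) = 3 * j + 3 ∧ lfvStep K (k, j, q) = (k, j, 3)
      ∧ lfvPos (lfvStep K (k, j, q)) = 3 * j + 2 ∧ j < K ∧ j < k) ∨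
    (q = 3 ∧ lfvPos (k, j, q) = 3 * j + 2 ∧ lfvStep K (k, j, q) = (k, j, 4)
      ∧ lfvPos (lfvStep K (k, j, q)) = 3 * j + 1 ∧ j < K ∧ j < k) ∨
    (q = 4 ∧ lfvPos (k, j, q) = 3 * j + 1 ∧ lfvStep K (k, j, q) = (k, j, 5)
      ∧ lfvPos (lfvStep K (k, j, q)) = 3 * j + 3 ∧ j < K ∧ j < k) ∨
    (q = 5 ∧ lfvPos (k, j, q) = 3 * j + 3 ∧ lfvStep K (k, j, q) = (k, j, 6)
      ∧ lfvPos (lfvStep K (k, j, q)) = 3 * j + 2 ∧ j < K) ∨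
    (q = 6 ∧ lfvPos (k, j, q) = 3 * j + 2 ∧ lfvStep K (k, j, q) = (k, j, 7)
      ∧ lfvPos (lfvStep K (k, j, q)) = 3 * j + 1 ∧ j < K) ∨
    (q = 7 ∧ lfvPos (k, j, q) = 3 * j + 1 ∧ lfvStep K (k, j, q) = (k + 1, 0, 0)
      ∧ lfvPos (lfvStep K (k, j, q)) = 0 ∧ j < K ∧ j = 0) ∨
    (q = 7 ∧ lfvPos (k, j, q) = 3 * j + 1 ∧ lfvStep K (k, j, q) = (k, j - 1, 2)
      ∧ lfvPos (lfvStep K (k, j, q)) = 3 * (j - 1) + 3 ∧ j < K ∧ 0 < j) := by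
  obtain ⟨h1, h2, h3, h4, h5⟩ := h
  simp only at h1 h2 h3 h4 h5
  interval_cases q
  · simp [lfvStep, lfvPos]
  · by_cases hj : j = K
    · simp [lfvStep, lfvPos, hj]
    · by_cases hk : j < k
      · have : j < K := by omega
        simp [lfvStep, lfvPos, hj, hk, this]; omega
      · have : j < K := by omega
        have h6 : j = k := by omega
        subst h6
        simp [lfvStep, lfvPos, hj, this]
  · simp [lfvStep, lfvPos]; omega
  · simp [lfvStep, lfvPos]; omega
  · simp [lfvStep, lfvPos]; omega
  · simp [lfvStep, lfvPos]; omega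
  · simp [lfvStep, lfvPos]; omega
  · by_cases hj : j = 0
    · subst hj
      simp [lfvStep, lfvPos]; omega
    · simp [lfvStep, lfvPos, hj]; omega

lemma lfv_adj {K : ℕ} (hK : 0 < K) {s : ℕ × ℕ × ℕ} (h : lfvOK K s) :
    lfvE K (lfvPos s) (lfvPos (lfvStep K s)) ∨ lfvE K (lfvPos (lfvStep K s)) (lfvPos s) := by
  obtain ⟨k, j, q⟩ := s
  have ht := lfv_trans h
  obtain ⟨h1, h2, -⟩ := h
  simp only at h1 h2
  generalize lfvPos (k, j, q) = p at *
  generalize lfvPos (lfvStep K (k, j, q)) = p' at *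
  simp only [lfvE]
  omega

lemma lfvE_cases {K a b : ℕ} (h : lfvE K a b) :
    (∃ i, a = 3 * i ∧ b = 3 * i + 1 ∧ i ≤ K) ∨ (∃ i, a = 3 * i + 1 ∧ b = 3 * i + 2 ∧ i < K) ∨
    (∃ i, a = 3 * i + 1 ∧ b = 3 * i + 3 ∧ i < K) ∨
    (∃ i, a = 3 * i + 2 ∧ b = 3 * i + 3 ∧ i < K) := by
  simp only [lfvE] at h
  by_cases h0 : a % 3 = 0
  · exact Or.inl ⟨a / 3, by omega, by omega, by omega⟩
  · by_cases h1 : a % 3 = 2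
    · exact Or.inr (Or.inr (Or.inr ⟨a / 3, by omega, by omega, by omega⟩))
    · by_cases h2 : b = a + 1
      · exact Or.inr (Or.inl ⟨a / 3, by omega, by omega, by omega⟩)
      · exact Or.inr (Or.inr (Or.inl ⟨a / 3, by omega, by omega, by omega⟩))

lemma lfvCnt_E (k j q i : ℕ) : lfvCnt (k, j, q) (3 * i) (3 * i + 1) =
    if i < j then 2 * (k - i) + 1
    else if j < i then (if q ≤ 1 then 2 * (k - i) else 2 * (k + 1 - i))
    else if q = 0 then 2 * (k - i) else 2 * (k - i) + 1 := by
  have e1 : (3 * i) / 3 = i := by omega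
  have e2 : (3 * i) % 3 = 0 := by omega
  simp only [lfvCnt, e1, e2, if_true]

lemma lfvCnt_G (k j q i : ℕ) : lfvCnt (k, j, q) (3 * i + 1) (3 * i + 2) =
    if i < j then 2 * (k - i) - 1
    else if j < i then (if q ≤ 1 then 2 * (k - i) - 1 else 2 * (k + 1 - i) - 1)
    else if q ≤ 3 then 2 * (k - i) - 1 else if q ≤ 6 then 2 * (k - i) else 2 * (k - i) + 1 := by
  have e1 : (3 * i + 1) / 3 = i := by omega
  have e2 : (3 * i + 1) % 3 = 1 := by omega
  simp [lfvCnt, e1, e2]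

lemma lfvCnt_F (k j q i : ℕ) : lfvCnt (k, j, q) (3 * i + 1) (3 * i + 3) =
    if i < j then 2 * (k - i)
    else if j < i then (if q ≤ 1 then 2 * (k - i) - 1 else 2 * (k + 1 - i) - 1)
    else if q ≤ 1 then 2 * (k - i) - 1 else if q ≤ 4 then 2 * (k - i) else 2 * (k - i) + 1 := by
  have e1 : (3 * i + 1) / 3 = i := by omega
  have e2 : (3 * i + 1) % 3 = 1 := by omega
  simp [lfvCnt, e1, e2]

lemma lfvCnt_Y (k j q i : ℕ) : lfvCnt (k, j, q) (3 * i + 2) (3 * i + 3) =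
    if i < j then 2 * (k - i) - 1
    else if j < i then (if q ≤ 1 then 2 * (k - i) - 1 else 2 * (k + 1 - i) - 1)
    else if q ≤ 2 then 2 * (k - i) - 1 else if q ≤ 5 then 2 * (k - i) else 2 * (k - i) + 1 := by
  have e1 : (3 * i + 2) / 3 = i := by omega
  have e2 : (3 * i + 2) % 3 = 2 := by omega
  simp [lfvCnt, e1, e2]

set_option maxHeartbeats 4000000 in
lemma lfvCnt_step {K : ℕ} (hK : 0 < K) {s : ℕ × ℕ × ℕ} (h : lfvOK K s) {a b : ℕ}
    (hab : lfvE K a b) :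
    lfvCnt (lfvStep K s) a b = lfvCnt s a b +
      if (lfvPos s = a ∧ lfvPos (lfvStep K s) = b) ∨ (lfvPos s = b ∧ lfvPos (lfvStep K s) = a)
      then 1 else 0 := by
  obtain ⟨k, j, q⟩ := s
  have ht := lfv_trans h
  obtain ⟨h1, h2, -⟩ := h
  simp only at h1 h2
  generalize lfvPos (lfvStep K (k, j, q)) = p' at *
  generalize lfvStep K (k, j, q) = s' at *
  generalize lfvPos (k, j, q) = p at *
  rcases lfvE_cases hab with ⟨i, rfl, rfl, hi⟩ | ⟨i, rfl, rfl, hi⟩ | ⟨i, rfl, rfl, hi⟩ |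
      ⟨i, rfl, rfl, hi⟩ <;> clear hab <;>
    rcases ht with ht | ht | ht | ht | ht | ht | ht | ht | ht | ht | ht <;>
    obtain ⟨rfl, rfl, rfl, rfl, ht⟩ := ht <;>
    simp only [lfvCnt_E, lfvCnt_F, lfvCnt_G, lfvCnt_Y] <;> split_ifs <;> first | omega | contradiction | (simp at *; done)

set_option maxHeartbeats 4000000 in
lemma lfvCnt_min {K : ℕ} {s : ℕ × ℕ × ℕ} (h : lfvOK K s) {a b a' b' : ℕ}
    (hab : lfvE K a b) (hab' : lfvE K a' b')
    (hs : (lfvPos s = a ∧ lfvPos (lfvStep K s) = b) ∨ (lfvPos s = b ∧ lfvPos (lfvStep K s) = a))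
    (hs' : lfvPos s = a' ∨ lfvPos s = b') :
    lfvCnt s a b ≤ lfvCnt s a' b' := by
  obtain ⟨k, j, q⟩ := s
  have ht := lfv_trans h
  obtain ⟨h1, h2, -⟩ := h
  simp only at h1 h2
  generalize lfvPos (lfvStep K (k, j, q)) = p' at *
  generalize lfvStep K (k, j, q) = s' at *
  generalize lfvPos (k, j, q) = p at *
  rcases lfvE_cases hab with ⟨i, rfl, rfl, hi⟩ | ⟨i, rfl, rfl, hi⟩ | ⟨i, rfl, rfl, hi⟩ |
      ⟨i, rfl, rfl, hi⟩ <;> clear hab <;>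
    rcases ht with ht | ht | ht | ht | ht | ht | ht | ht | ht | ht | ht <;>
    obtain ⟨rfl, rfl, rfl, rfl, ht⟩ := ht <;> (try (exfalso; omega)) <;>
    rcases lfvE_cases hab' with ⟨i', rfl, rfl, hi'⟩ | ⟨i', rfl, rfl, hi'⟩ |
      ⟨i', rfl, rfl, hi'⟩ | ⟨i', rfl, rfl, hi'⟩ <;> clear hab' <;> (try (exfalso; omega)) <;>
    simp only [lfvCnt_E, lfvCnt_F, lfvCnt_G, lfvCnt_Y] <;> split_ifs <;> omega

/-- The state at time `t`. -/
def lfvSt (K : ℕ) : ℕ → ℕ × ℕ × ℕ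
  | 0 => (0, 0, 0)
  | t + 1 => lfvStep K (lfvSt K t)

lemma lfvSt_ok {K : ℕ} (hK : 0 < K) (t : ℕ) : lfvOK K (lfvSt K t) := by
  induction t with
  | zero => simp [lfvSt, lfvOK]
  | succ t ih => exact lfvOK_step hK ih

/-- Lower bound for the time at which a state can be reached. -/
def lfvPot (K : ℕ) (s : ℕ × ℕ × ℕ) : ℕ :=
  if K ≤ s.1 then K ^ 2
  else if s.2.2 ≤ 1 then s.1 ^ 2 + 2 * s.2.1 + s.2.2 else s.1 ^ 2 + 2 * s.1 + 1

lemma lfvPot_step {K : ℕ} {s : ℕ × ℕ × ℕ} (h : lfvOK K s) :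
    lfvPot K (lfvStep K s) ≤ lfvPot K s + 1 := by
  obtain ⟨k, j, q⟩ := s
  have ht := lfv_trans h
  obtain ⟨h1, h2, h3, h4, h5⟩ := h
  simp only at h1 h2 h3 h4 h5
  have e : (k + 1) ^ 2 = k ^ 2 + 2 * k + 1 := by ring
  by_cases hk : K ≤ k
  · have hs : K ≤ (lfvStep K (k, j, q)).1 := by
      simp only [lfvStep]; split_ifs <;> simp <;> omega
    simp [lfvPot, hk, hs]
  · have e2 : K ≤ k + 1 → K ^ 2 = k ^ 2 + 2 * k + 1 := by
      intro h'
      have : K = k + 1 := by omega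
      rw [this, e]
    rcases ht with ht | ht | ht | ht | ht | ht | ht | ht | ht | ht | ht <;>
      obtain ⟨rfl, -, hst, -, ht⟩ := ht <;> rw [hst] <;> simp only [lfvPot, e] <;>
      split_ifs <;> omega

lemma lfvPot_le {K : ℕ} (hK : 0 < K) (t : ℕ) : lfvPot K (lfvSt K t) ≤ t := by
  induction t with
  | zero => simp [lfvSt, lfvPot]
  | succ t ih => exact (lfvPot_step (lfvSt_ok hK t)).trans (by omega)

lemma lfv_late {K : ℕ} (hK : 0 < K) (t : ℕ) (h : lfvPos (lfvSt K t) = 3 * K + 1) :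
    K ^ 2 ≤ t := by
  have h1 := lfvPot_le hK t
  have h2 := lfvSt_ok hK t
  generalize lfvSt K t = s at *
  obtain ⟨k, j, q⟩ := s
  have : K ≤ k := by
    simp only [lfvOK, lfvPos] at *
    split_ifs at h <;> omega
  simpa [lfvPot, this] using h1

/-- The chain of `K` triangles. -/
def lfvG (K : ℕ) : SimpleGraph (Fin (3 * K + 2)) where
  Adj u v := lfvE K u v ∨ lfvE K v u
  symm := ⟨fun _ _ h => h.symm⟩
  loopless := ⟨fun u h => by simp only [lfvE] at h; omega⟩

lemma lfvG_connected (K : ℕ) : (lfvG K).Connected := by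
  have key : ∀ m (hm : m < 3 * K + 2), (lfvG K).Reachable ⟨0, by omega⟩ ⟨m, hm⟩ := by
    intro m
    induction m with
    | zero => intro hm; exact SimpleGraph.Reachable.refl _
    | succ m ih =>
      intro hm
      refine (ih (by omega)).trans (SimpleGraph.Adj.reachable ?_)
      left
      exact ⟨Or.inl rfl, by simp only; omega⟩
  have : Nonempty (Fin (3 * K + 2)) := ⟨⟨0, by omega⟩⟩
  exact ⟨fun u v => (key u.1 u.2).symm.trans (key v.1 v.2)⟩

lemma lfvG_degree (K : ℕ) (v : Fin (3 * K + 2)) :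
    {u : Fin (3 * K + 2) | (lfvG K).Adj v u}.ncard ≤ 3 := by
  rw [← Set.ncard_image_of_injective _ Fin.val_injective]
  have hsub : Fin.val '' {u : Fin (3 * K + 2) | (lfvG K).Adj v u} ⊆
      ((({v.1 - 1, v.1 + 1, if v.1 % 3 = 1 then v.1 + 2 else v.1 - 2} : Finset ℕ)) : Set ℕ) := by
    rintro _ ⟨u, hu, rfl⟩
    have hu' : lfvE K v u ∨ lfvE K u v := hu
    simp only [lfvE] at hu'
    simp only [Finset.coe_insert, Finset.coe_singleton, Set.mem_insert_iff, Set.mem_singleton_iff]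
    split_ifs <;> omega
  refine (Set.ncard_le_ncard hsub (Finset.finite_toSet _)).trans ?_
  rw [Set.ncard_coe_finset]
  exact Finset.card_le_three

/-- The walk. -/
def lfvW {K : ℕ} (hK : 0 < K) (t : ℕ) : Fin (3 * K + 2) :=
  ⟨lfvPos (lfvSt K t), by have := lfvPos_le (lfvSt_ok hK t); omega⟩

lemma lfv_count {K : ℕ} (hK : 0 < K) (t : ℕ) (a b : Fin (3 * K + 2)) (hab : lfvE K a b) :
    {t' : ℕ | t' < t ∧ s(lfvW hK t', lfvW hK (t' + 1)) = s(a, b)}.ncard =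
      lfvCnt (lfvSt K t) a b := by
  induction t with
  | zero =>
    simp [lfvSt, lfvCnt]
  | succ t ih =>
    have hc := lfvCnt_step hK (lfvSt_ok hK t) hab
    have hfin : {t' : ℕ | t' < t ∧ s(lfvW hK t', lfvW hK (t' + 1)) = s(a, b)}.Finite :=
      (Set.finite_lt_nat t).subset fun x hx => hx.1
    have hiff : (s(lfvW hK t, lfvW hK (t + 1)) = s(a, b)) ↔
        ((lfvPos (lfvSt K t) = a ∧ lfvPos (lfvStep K (lfvSt K t)) = b) ∨
          (lfvPos (lfvSt K t) = b ∧ lfvPos (lfvStep K (lfvSt K t)) = a)) := by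
      simp [lfvW, Fin.ext_iff, lfvSt]
    show _ = lfvCnt (lfvStep K (lfvSt K t)) a b
    rw [hc, ← ih]
    by_cases hP : s(lfvW hK t, lfvW hK (t + 1)) = s(a, b)
    · rw [if_pos (hiff.1 hP), ← Set.ncard_insert_of_notMem (a := t) (by simp) hfin]
      congr 1
      ext x
      simp only [Set.mem_ofPred_eq, Set.mem_insert_iff]
      constructor
      · rintro ⟨h1, h2⟩
        by_cases hx : x = t
        · exact Or.inl hx
        · exact Or.inr ⟨by omega, h2⟩
      · rintro (rfl | ⟨h1, h2⟩)
        · exact ⟨by omega, hP⟩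
        · exact ⟨by omega, h2⟩
    · rw [if_neg (fun h => hP (hiff.2 h)), add_zero]
      congr 1
      ext x
      simp only [Set.mem_ofPred_eq]
      constructor
      · rintro ⟨h1, h2⟩
        have hx : x ≠ t := by rintro rfl; exact hP h2
        exact ⟨by omega, h2⟩
      · rintro ⟨h1, h2⟩
        exact ⟨by omega, h2⟩

lemma lfv_policy {K : ℕ} (hK : 0 < K) (t : ℕ) (u : Fin (3 * K + 2))
    (hu : (lfvG K).Adj (lfvW hK t) u) :
    {t' : ℕ | t' < t ∧ s(lfvW hK t', lfvW hK (t' + 1)) = s(lfvW hK t, lfvW hK (t + 1))}.ncard ≤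
      {t' : ℕ | t' < t ∧ s(lfvW hK t', lfvW hK (t' + 1)) = s(lfvW hK t, u)}.ncard := by
  have hok := lfvSt_ok hK t
  have hadj : lfvE K (lfvW hK t) (lfvW hK (t + 1)) ∨ lfvE K (lfvW hK (t + 1)) (lfvW hK t) :=
    lfv_adj hK hok
  have hu' : lfvE K (lfvW hK t) u ∨ lfvE K u (lfvW hK t) := hu
  rcases hadj with h1 | h1 <;> rcases hu' with h2 | h2
  · rw [lfv_count hK t _ _ h1, lfv_count hK t _ _ h2]
    exact lfvCnt_min hok h1 h2 (Or.inl ⟨rfl, rfl⟩) (Or.inl rfl)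
  · rw [Sym2.eq_swap (a := lfvW hK t) (b := u), lfv_count hK t _ _ h1, lfv_count hK t _ _ h2]
    exact lfvCnt_min hok h1 h2 (Or.inl ⟨rfl, rfl⟩) (Or.inr rfl)
  · rw [Sym2.eq_swap (a := lfvW hK t) (b := lfvW hK (t + 1)), lfv_count hK t _ _ h1,
      lfv_count hK t _ _ h2]
    exact lfvCnt_min hok h1 h2 (Or.inr ⟨rfl, rfl⟩) (Or.inl rfl)
  · rw [Sym2.eq_swap (a := lfvW hK t) (b := lfvW hK (t + 1)),
      Sym2.eq_swap (a := lfvW hK t) (b := u), lfv_count hK t _ _ h1, lfv_count hK t _ _ h2]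
    exact lfvCnt_min hok h1 h2 (Or.inr ⟨rfl, rfl⟩) (Or.inr rfl)


/-- There is a constant `c > 0` such that for infinitely many `n` there is a connected
simple graph on `n` vertices of maximum degree at most `3` and a walk following the
LFV-e (least-frequently-visited edge) policy whose cover time is at least `c * n ^ 2`. -/
theorem lfv_e_quadratic_lower_bound :
    ∃ c : ℝ, 0 < c ∧
      ∀ N : ℕ, ∃ n : ℕ, N ≤ n ∧
        ∃ G : SimpleGraph (Fin n),
          G.Connected ∧
          (∀ v : Fin n, {u : Fin n | G.Adj v u}.ncard ≤ 3) ∧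
          ∃ w : ℕ → Fin n,
            -- `w` is a walk on `G`
            (∀ t : ℕ, G.Adj (w t) (w (t + 1))) ∧
            -- `w` follows the LFV-e policy
            (∀ t : ℕ, ∀ u : Fin n, G.Adj (w t) u →
              {t' : ℕ | t' < t ∧ s(w t', w (t' + 1)) = s(w t, w (t + 1))}.ncard ≤
                {t' : ℕ | t' < t ∧ s(w t', w (t' + 1)) = s(w t, u)}.ncard) ∧
            -- the cover time of `w` is at least `c * n ^ 2`
            ∃ v : Fin n, ∀ t : ℕ, (t : ℝ) < c * (n : ℝ) ^ 2 → w t ≠ v := by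
  refine ⟨1 / 25, by norm_num, fun N => ?_⟩
  have hK : 0 < N + 1 := by omega
  refine ⟨3 * (N + 1) + 2, by omega, lfvG (N + 1), lfvG_connected _, lfvG_degree _, lfvW hK,
    fun t => lfv_adj hK (lfvSt_ok hK t), fun t u hu => lfv_policy hK t u hu,
    ⟨3 * (N + 1) + 1, by omega⟩, ?_⟩
  intro t ht hw
  have h1 : lfvPos (lfvSt (N + 1) t) = 3 * (N + 1) + 1 := congrArg Fin.val hw
  have h2 : (((N + 1) ^ 2 : ℕ) : ℝ) ≤ (t : ℝ) := by exact_mod_cast lfv_late hK t h1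
  push_cast at h2 ht
  have h3 : (0 : ℝ) ≤ N := Nat.cast_nonneg N
  nlinarith
end

section
/- There exists a universal constant C > 0 such that the following holds for every constant a > 0. Let G be a finite connected simple graph with n ≥ 1 vertices, maximum degree at most 3, and diameter d with d ≤ a·√n, and let w be a walk on G following the LFV-e policy. Then every vertex of G has latency at most C·a·n^(3/2) under w: for every vertex v of G and every time t ∈ ℕ there exists t' with t ≤ t' ≤ t + C·a·n^(3/2) such that w(t') = v. -/
/-- Number of traversals of the unordered pair `e` before time `t`. -/
noncomputable def ec {V : Type} (w : ℕ → V) (e : Sym2 V) (t : ℕ) : ℕ :=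
  {t' : ℕ | t' < t ∧ s(w t', w (t' + 1)) = e}.ncard

lemma ec_zero {V : Type} (w : ℕ → V) (e : Sym2 V) : ec w e 0 = 0 := by
  simp [ec]

lemma ec_succ_eq {V : Type} (w : ℕ → V) (e : Sym2 V) (t : ℕ)
    (h : s(w t, w (t + 1)) = e) : ec w e (t + 1) = ec w e t + 1 := by
  unfold ec
  have hs : {t' : ℕ | t' < t + 1 ∧ s(w t', w (t' + 1)) = e}
      = insert t {t' : ℕ | t' < t ∧ s(w t', w (t' + 1)) = e} := by
    ext x
    simp only [Set.mem_ofPred_eq, Set.mem_insert_iff]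
    constructor
    · rintro ⟨h1, h2⟩
      rcases Nat.lt_succ_iff_lt_or_eq.mp h1 with h3 | h3
      · exact Or.inr ⟨h3, h2⟩
      · exact Or.inl h3
    · rintro (rfl | ⟨h1, h2⟩)
      · exact ⟨Nat.lt_succ_self _, h⟩
      · exact ⟨by omega, h2⟩
  have hfin : {t' : ℕ | t' < t ∧ s(w t', w (t' + 1)) = e}.Finite :=
    (Set.finite_lt_nat t).subset (fun x hx => hx.1)
  rw [hs, Set.ncard_insert_of_notMem (by simp) hfin]

lemma ec_succ_ne {V : Type} (w : ℕ → V) (e : Sym2 V) (t : ℕ)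
    (h : s(w t, w (t + 1)) ≠ e) : ec w e (t + 1) = ec w e t := by
  unfold ec
  congr 1
  ext x
  simp only [Set.mem_ofPred_eq]
  constructor
  · rintro ⟨h1, h2⟩
    rcases Nat.lt_succ_iff_lt_or_eq.mp h1 with h3 | h3
    · exact ⟨h3, h2⟩
    · subst h3; exact absurd h2 h
  · rintro ⟨h1, h2⟩
    exact ⟨by omega, h2⟩

lemma ec_mono_succ {V : Type} (w : ℕ → V) (e : Sym2 V) (t : ℕ) :
    ec w e t ≤ ec w e (t + 1) := by
  by_cases h : s(w t, w (t + 1)) = e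
  · rw [ec_succ_eq w e t h]; omega
  · rw [ec_succ_ne w e t h]

/-- The key invariant, for an even threshold `J`. -/
lemma key_invariant {V : Type} [Fintype V] [DecidableEq V] (G : SimpleGraph V) [DecidableRel G.Adj]
    (w : ℕ → V) (hw : ∀ t, G.Adj (w t) (w (t + 1)))
    (hl : ∀ t u, G.Adj (w t) u → ec w s(w t, w (t + 1)) t ≤ ec w s(w t, u) t)
    (J : ℕ) (hJ : (J : ZMod 2) = 0) (t : ℕ) :
    ∃ y : V,
      (∀ v, (∑ u ∈ G.neighborFinset v, ((min (ec w s(v, u) t) J : ℕ) : ZMod 2))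
        = (if v = y then 1 else 0) + (if v = w t then 1 else 0)) ∧
      (∀ v, (∃ u, G.Adj v u ∧ ec w s(v, u) t < J) →
        ∀ u, G.Adj v u → ec w s(v, u) t ≤ J + (if v = y then 1 else 0)) := by
  have two : (1 : ZMod 2) + 1 = 0 := by decide
  induction t with
  | zero =>
    refine ⟨w 0, ?_, ?_⟩
    · intro v
      simp only [ec_zero]
      split_ifs <;> simp [two]
    · intro v _ u _
      rw [ec_zero]; omega
  | succ t ih =>
    obtain ⟨y, hp, hh⟩ := ih
    have hne : w t ≠ w (t + 1) := (hw t).ne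
    by_cases hc : ec w s(w t, w (t + 1)) t < J
    · refine ⟨y, ?_, ?_⟩
      · intro v
        have hflip : (∑ u ∈ G.neighborFinset v, ((min (ec w s(v, u) (t + 1)) J : ℕ) : ZMod 2))
            = (∑ u ∈ G.neighborFinset v, ((min (ec w s(v, u) t) J : ℕ) : ZMod 2))
              + ∑ u ∈ G.neighborFinset v, (if s(w t, w (t + 1)) = s(v, u) then 1 else 0) := by
          rw [← Finset.sum_add_distrib]
          refine Finset.sum_congr rfl fun u _ => ?_
          by_cases he : s(w t, w (t + 1)) = s(v, u)
          · rw [if_pos he, ec_succ_eq w _ t he, ← he]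
            rw [min_eq_left (by omega), min_eq_left (by omega)]
            push_cast; rfl
          · rw [if_neg he, ec_succ_ne w _ t he, add_zero]
        have hcount : (∑ u ∈ G.neighborFinset v,
            (if s(w t, w (t + 1)) = s(v, u) then (1 : ZMod 2) else 0))
            = (if v = w t then 1 else 0) + (if v = w (t + 1) then 1 else 0) := by
          by_cases h1 : v = w t
          · have h2 : v ≠ w (t + 1) := h1 ▸ hne
            rw [if_pos h1, if_neg h2, add_zero,
              Finset.sum_eq_single (w (t + 1))]
            · simp [h1]
            · intro b _ hb
              rw [if_neg]
              rw [h1, Sym2.congr_right]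
              exact fun h => hb h.symm
            · intro h
              exact absurd (by simpa [h1] using hw t) h
          · by_cases h2 : v = w (t + 1)
            · rw [if_neg h1, if_pos h2, zero_add, Finset.sum_eq_single (w t)]
              · rw [if_pos]; rw [h2, Sym2.eq_swap]
              · intro b _ hb
                rw [if_neg]
                rw [h2, Sym2.eq_swap, Sym2.congr_right]
                exact fun h => hb h.symm
              · intro h
                exact absurd (by simpa [h2] using (hw t).symm) h
            · rw [if_neg h1, if_neg h2, add_zero]
              refine Finset.sum_eq_zero fun u _ => ?_
              rw [if_neg]
              intro h
              rcases Sym2.eq_iff.mp h with ⟨a, _⟩ | ⟨_, a⟩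
              · exact h1 a.symm
              · exact h2 a.symm
        rw [hflip, hp v, hcount]
        have : ∀ a b c : ZMod 2, a + b + (b + c) = a + c := by decide
        exact this _ _ _
      · intro v ⟨u0, ha, hlt⟩ u hu
        have := hh v ⟨u0, ha, lt_of_le_of_lt (ec_mono_succ w _ t) hlt⟩ u hu
        by_cases he : s(w t, w (t + 1)) = s(v, u)
        · rw [ec_succ_eq w _ t he, ← he]; omega
        · rw [ec_succ_ne w _ t he]; exact this
    · push Not at hc
      have hsat : ∀ u, G.Adj (w t) u → J ≤ ec w s(w t, u) t := fun u hu => hc.trans (hl t u hu)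
      have hy : w t = y := by
        have h := hp (w t)
        rw [Finset.sum_eq_zero] at h
        · by_contra hcon
          rw [if_neg hcon] at h
          simp at h
        · intro u hu
          rw [min_eq_right (hsat u (by simpa using hu)), hJ]
      refine ⟨w (t + 1), ?_, ?_⟩
      · intro v
        have hsame : (∑ u ∈ G.neighborFinset v, ((min (ec w s(v, u) (t + 1)) J : ℕ) : ZMod 2))
            = (∑ u ∈ G.neighborFinset v, ((min (ec w s(v, u) t) J : ℕ) : ZMod 2)) := by
          refine Finset.sum_congr rfl fun u _ => ?_
          by_cases he : s(w t, w (t + 1)) = s(v, u)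
          · rw [ec_succ_eq w _ t he, ← he]
            rw [min_eq_right (by omega), min_eq_right (by omega)]
          · rw [ec_succ_ne w _ t he]
        have dbl : ∀ a : ZMod 2, a + a = 0 := by decide
        rw [hsame, hp v, hy, dbl, dbl]
      · intro v ⟨u0, ha, hlt⟩ u hu
        have hlt' := lt_of_le_of_lt (ec_mono_succ w _ t) hlt
        have hv : v ≠ w t := by
          rintro rfl
          have := hsat u0 ha
          omega
        have hb := hh v ⟨u0, ha, hlt'⟩ u hu
        rw [if_neg (hy ▸ hv)] at hb
        by_cases he : s(w t, w (t + 1)) = s(v, u)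
        · have : v = w (t + 1) := by
            rcases Sym2.eq_iff.mp he with ⟨a, _⟩ | ⟨_, a⟩
            · exact absurd a.symm hv
            · exact a.symm
          rw [ec_succ_eq w _ t he, if_pos this]; omega
        · rw [ec_succ_ne w _ t he]; omega

/-- Counts of edges sharing a vertex differ by at most three. -/
lemma local_gap {V : Type} [Fintype V] (G : SimpleGraph V)
    (w : ℕ → V) (hw : ∀ t, G.Adj (w t) (w (t + 1)))
    (hl : ∀ t u, G.Adj (w t) u → ec w s(w t, w (t + 1)) t ≤ ec w s(w t, u) t)
    (t : ℕ) (v u u' : V) (hu : G.Adj v u) (hu' : G.Adj v u') :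
    ec w s(v, u) t ≤ ec w s(v, u') t + 3 := by
  classical
  have hJ : ((2 * (ec w s(v, u') t / 2 + 1) : ℕ) : ZMod 2) = 0 := by
    rw [ZMod.natCast_eq_zero_iff]; exact dvd_mul_right _ _
  obtain ⟨y, -, h⟩ := key_invariant G w hw hl _ hJ t
  have := h v ⟨u', hu', by omega⟩ u hu
  split_ifs at this <;> omega

lemma walk_gap {V : Type} [Fintype V] (G : SimpleGraph V)
    (w : ℕ → V) (hw : ∀ t, G.Adj (w t) (w (t + 1)))
    (hl : ∀ t u, G.Adj (w t) u → ec w s(w t, w (t + 1)) t ≤ ec w s(w t, u) t)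
    (t : ℕ) {v v' : V} (p : G.Walk v v') (u' : V) (hu' : G.Adj v' u') :
    ∀ u, G.Adj v u → ec w s(v, u) t ≤ ec w s(v', u') t + 3 * (p.length + 1) := by
  induction p with
  | nil =>
    intro u hu
    simpa using local_gap G w hw hl t _ u u' hu hu'
  | @cons a b c hab p ih =>
    intro u hu
    have h1 := local_gap G w hw hl t a u b hu hab
    have h2 := ih hu' a hab.symm
    rw [Sym2.eq_swap] at h2
    rw [SimpleGraph.Walk.length_cons]
    omega

lemma sum_grow {V : Type} [Fintype V] [DecidableEq V] (G : SimpleGraph V) [DecidableRel G.Adj]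
    (w : ℕ → V) (hw : ∀ t, G.Adj (w t) (w (t + 1))) (t L : ℕ) :
    (∑ v, ∑ u ∈ G.neighborFinset v, ec w s(v, u) t) + L
      ≤ ∑ v, ∑ u ∈ G.neighborFinset v, ec w s(v, u) (t + L) := by
  induction L with
  | zero => simp
  | succ L ih =>
    have : (∑ v, ∑ u ∈ G.neighborFinset v, ec w s(v, u) (t + L))
        < ∑ v, ∑ u ∈ G.neighborFinset v, ec w s(v, u) (t + L + 1) := by
      refine Finset.sum_lt_sum (fun v _ => Finset.sum_le_sum fun u _ => ec_mono_succ w _ _)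
        ⟨w (t + L), Finset.mem_univ _, ?_⟩
      refine Finset.sum_lt_sum (fun u _ => ec_mono_succ w _ _)
        ⟨w (t + L + 1), by simpa using hw (t + L), ?_⟩
      rw [ec_succ_eq w _ _ rfl]; omega
    rw [← add_assoc, ← add_assoc]
    omega

lemma ec_const {V : Type} (w : ℕ → V) (v u : V) (t L : ℕ)
    (h : ∀ t', t ≤ t' → t' ≤ t + L → w t' ≠ v) : ec w s(v, u) (t + L) = ec w s(v, u) t := by
  induction L with
  | zero => rfl
  | succ L ih =>
    rw [← ih (fun t' h1 h2 => h t' h1 (by omega)), ← add_assoc]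
    apply ec_succ_ne
    intro he
    rcases Sym2.eq_iff.mp he with ⟨a, _⟩ | ⟨_, a⟩
    · exact h (t + L) (by omega) (by omega) a
    · exact h (t + L + 1) (by omega) (by omega) a

lemma window_bound {V : Type} [Fintype V] (G : SimpleGraph V) (hG : G.Connected)
    (hdeg : ∀ v : V, {u : V | G.Adj v u}.ncard ≤ 3) (d : ℕ) (hd : ∀ u v, G.dist u v ≤ d)
    (w : ℕ → V) (hw : ∀ t, G.Adj (w t) (w (t + 1)))
    (hl : ∀ t u, G.Adj (w t) u → ec w s(w t, w (t + 1)) t ≤ ec w s(w t, u) t)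
    (v : V) (t L : ℕ) (h : ∀ t', t ≤ t' → t' ≤ t + L → w t' ≠ v) :
    L ≤ 18 * Fintype.card V * (d + 1) := by
  classical
  have : Nontrivial V := ⟨_, _, (hw 0).ne⟩
  obtain ⟨u0, hu0⟩ := hG.preconnected.exists_adj_of_nontrivial v
  have hgap : ∀ x u, G.Adj x u → ec w s(x, u) (t + L) ≤ ec w s(x, u) t + 6 * (d + 1) := by
    intro x u hxu
    obtain ⟨p, hp⟩ := hG.exists_walk_length_eq_dist x v
    obtain ⟨q, hq⟩ := hG.exists_walk_length_eq_dist v x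
    have h1 := walk_gap G w hw hl (t + L) p u0 hu0 u hxu
    have h2 := walk_gap G w hw hl t q u hxu u0 hu0
    have h3 := ec_const w v u0 t L h
    have h4 := hd x v
    have h5 := hd v x
    omega
  have hcard : ∀ x, (G.neighborFinset x).card ≤ 3 := by
    intro x
    have h1 := hdeg x
    have h2 : {u : V | G.Adj x u} = (G.neighborFinset x : Set V) := by ext; simp
    rwa [h2, Set.ncard_coe_finset] at h1
  have hS := sum_grow G w hw t L
  have hT : ∑ x, ∑ u ∈ G.neighborFinset x, ec w s(x, u) (t + L)
      ≤ (∑ x, ∑ u ∈ G.neighborFinset x, ec w s(x, u) t)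
        + Fintype.card V * (3 * (6 * (d + 1))) := by
    calc _ ≤ ∑ x, ((∑ u ∈ G.neighborFinset x, ec w s(x, u) t) + 3 * (6 * (d + 1))) := by
          refine Finset.sum_le_sum fun x _ => ?_
          calc _ ≤ ∑ u ∈ G.neighborFinset x, (ec w s(x, u) t + 6 * (d + 1)) :=
                Finset.sum_le_sum fun u hu => hgap x u (by simpa using hu)
            _ = (∑ u ∈ G.neighborFinset x, ec w s(x, u) t)
                + (G.neighborFinset x).card * (6 * (d + 1)) := by
                rw [Finset.sum_add_distrib, Finset.sum_const, smul_eq_mul]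
            _ ≤ _ := Nat.add_le_add_left (Nat.mul_le_mul_right _ (hcard x)) _
      _ = _ := by
          rw [Finset.sum_add_distrib, Finset.sum_const, smul_eq_mul, Finset.card_univ]
  have : Fintype.card V * (3 * (6 * (d + 1))) = 18 * Fintype.card V * (d + 1) := by ring
  omega

/-- There is a universal constant `C > 0` such that for every `a > 0` and every finite
connected simple graph `G` on `n ≥ 1` vertices with maximum degree at most `3` and
diameter `d ≤ a * √n`, and every walk `w` on `G` following the LFV-e policy, every vertex
of `G` is visited in every time window of length `C * a * n ^ (3 / 2)`. -/
theorem lfv_e_vertex_latency_small_diameter :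
    ∃ C : ℝ, 0 < C ∧
      ∀ a : ℝ, 0 < a →
      ∀ (V : Type) [Fintype V] (G : SimpleGraph V), G.Connected →
        ∀ n : ℕ, n = Fintype.card V → 1 ≤ n →
        (∀ v : V, {u : V | G.Adj v u}.ncard ≤ 3) →
        -- `d` is the diameter of `G`, with `d ≤ a * √n`
        ∀ d : ℕ, IsGreatest {k : ℕ | ∃ u v : V, G.dist u v = k} d →
          (d : ℝ) ≤ a * Real.sqrt n →
        ∀ w : ℕ → V,
          -- `w` is a walk on `G`
          (∀ t : ℕ, G.Adj (w t) (w (t + 1))) →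
          -- `w` follows the LFV-e policy
          (∀ t : ℕ, ∀ u : V, G.Adj (w t) u →
            {t' : ℕ | t' < t ∧ s(w t', w (t' + 1)) = s(w t, w (t + 1))}.ncard ≤
              {t' : ℕ | t' < t ∧ s(w t', w (t' + 1)) = s(w t, u)}.ncard) →
          ∀ v : V, ∀ t : ℕ,
            ∃ t' : ℕ, t ≤ t' ∧
              (t' : ℝ) ≤ (t : ℝ) + C * a * (n : ℝ) ^ ((3 : ℝ) / 2) ∧ w t' = v := by
  refine ⟨40, by norm_num, ?_⟩
  intro a ha V _ G hG n hn hn1 hdeg d hd hda w hw hl v t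
  by_contra hcon
  push Not at hcon
  have hdist : ∀ u v, G.dist u v ≤ d := fun u v => hd.2 ⟨u, v, rfl⟩
  have hd1 : 1 ≤ d := by
    have h1 := hdist (w 0) (w 1)
    rwa [SimpleGraph.dist_eq_one_iff_adj.mpr (hw 0)] at h1
  have hn1' : (1 : ℝ) ≤ n := by exact_mod_cast hn1
  have hd1' : (1 : ℝ) ≤ d := by exact_mod_cast hd1
  have hpow : (n : ℝ) ^ ((3 : ℝ) / 2) = n * Real.sqrt n := by
    rw [Real.sqrt_eq_rpow, show (3 : ℝ) / 2 = 1 + 1 / 2 by norm_num,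
      Real.rpow_add (by linarith), Real.rpow_one]
  set x : ℝ := a * (n : ℝ) ^ ((3 : ℝ) / 2) with hx
  have hxd : (n : ℝ) * d ≤ x := by
    rw [hx, hpow]
    have := mul_le_mul_of_nonneg_left hda (show (0 : ℝ) ≤ n by linarith)
    linarith
  have hnd : (1 : ℝ) ≤ n * d := by nlinarith
  have hfl := Nat.floor_le (show (0 : ℝ) ≤ 40 * x by linarith)
  have hfl2 := Nat.lt_floor_add_one (40 * x)
  have hL := window_bound G hG hdeg d hdist w hw hl v t ⌊40 * x⌋₊ (by
    intro t' h1 h2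
    refine hcon t' h1 ?_
    have : (t' : ℝ) ≤ t + (⌊40 * x⌋₊ : ℝ) := by exact_mod_cast h2
    have h3 : 40 * a * (n : ℝ) ^ ((3 : ℝ) / 2) = 40 * x := by rw [hx]; ring
    rw [h3]; linarith)
  rw [← hn] at hL
  have hL' : (⌊40 * x⌋₊ : ℝ) ≤ 18 * n * (d + 1) := by exact_mod_cast hL
  nlinarith
end
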